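/- arXiv:2006.05254 — 3 statements merged into one kernel-verified Lean document; each statement's English description precedes it below -/
import Mathlib

section
/- Let f : ℝ^d → ℝ be 1-Lipschitz (Euclidean norm) and m_f-piecewise linear. Then there exists a GroupSort neural network of grouping size 2 satisfying Assumption 1 that represents f exactly, with depth ⌈log₂(M_f)⌉ + ⌈log₂(m_f)⌉ + 1 and size at most 3 m_f M_f + M_f − 1. -/
open Matrix

/-- A GroupSort feedforward neural network with grouping size `k`, input dimension `d`
and real output.  `depth` is the number of affine layers (`q` in the paper), so there are
`depth - 1` hidden layers of widths `width 1, …, width (depth - 1)` (each divisible by `k`),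
with `width 0 = d` (input) and `width depth = 1` (output). -/
structure GroupSortNet (k d : ℕ) where
  depth : ℕ
  depth_pos : 1 ≤ depth
  width : ℕ → ℕ
  width_in : width 0 = d
  width_out : width depth = 1
  width_div : ∀ i, 1 ≤ i → i ≤ depth - 1 → k ∣ width i
  V : (i : ℕ) → Matrix (Fin (width (i + 1))) (Fin (width i)) ℝ
  c : (i : ℕ) → Fin (width (i + 1)) → ℝ

/-- The GroupSort activation with grouping size `k`: the coordinates are split into
consecutive groups of `k` elements and each group is sorted in decreasing order. -/
noncomputable def groupSortFun (k : ℕ) {ν : ℕ} (x : Fin ν → ℝ) : Fin ν → ℝ := fun i =>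
  if hk : 0 < k then
    let grp : Fin k → ℝ := fun j =>
      if h : ((i : ℕ) / k) * k + (j : ℕ) < ν then x ⟨((i : ℕ) / k) * k + (j : ℕ), h⟩ else 0
    (grp ∘ Tuple.sort grp)
      ⟨k - 1 - (i : ℕ) % k, lt_of_le_of_lt (Nat.sub_le _ _) (Nat.sub_lt hk Nat.one_pos)⟩
  else x i

/-- Output of the hidden layers: `post x i` is the (activated) output of layer `i`. -/
noncomputable def GroupSortNet.post {k d : ℕ} (N : GroupSortNet k d) (x : Fin d → ℝ) :
    (i : ℕ) → Fin (N.width i) → ℝ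
  | 0 => fun j => x (Fin.cast N.width_in j)
  | i + 1 => groupSortFun k (N.V i *ᵥ N.post x i + N.c i)

/-- The real-valued function computed by the network (no activation after the last
affine layer). -/
noncomputable def GroupSortNet.eval {k d : ℕ} (N : GroupSortNet k d) (x : Fin d → ℝ) : ℝ :=
  (N.V (N.depth - 1) *ᵥ N.post x (N.depth - 1) + N.c (N.depth - 1))
    ⟨0, by
      have h : N.depth - 1 + 1 = N.depth := Nat.succ_pred_eq_of_pos N.depth_pos
      rw [h, N.width_out]
      exact Nat.one_pos⟩

/-- The size of the network: the sum of the widths of the hidden layers. -/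
def GroupSortNet.size {k d : ℕ} (N : GroupSortNet k d) : ℕ :=
  ∑ i ∈ Finset.Icc 1 (N.depth - 1), N.width i

/-- Assumption 1: `‖V₁‖_{2,∞} ≤ 1` (every row of `V₁` has Euclidean norm at most `1`),
`‖V_i‖_∞ ≤ 1` for `i = 2, …, q` (every row has `ℓ¹`-norm at most `1`), and all offsets
are bounded by some constant `K₂ ≥ 0`. -/
def GroupSortNet.Assumption1 {k d : ℕ} (N : GroupSortNet k d) : Prop :=
  (∀ r, ∑ j, (N.V 0 r j) ^ 2 ≤ 1) ∧
  (∀ i, 1 ≤ i → i < N.depth → ∀ r, ∑ j, |N.V i r j| ≤ 1) ∧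
  (∃ K₂ : ℝ, 0 ≤ K₂ ∧ ∀ i, i < N.depth → ∀ r, |N.c i r| ≤ K₂)

/-- A (possibly unbounded, possibly partly open) polyhedral set: a finite intersection of
(strict or non-strict) affine half-spaces. -/
def IsPolyhedralSet {d : ℕ} (S : Set (Fin d → ℝ)) : Prop :=
  ∃ (n : ℕ) (a : Fin n → Fin d → ℝ) (b : Fin n → ℝ) (strict : Fin n → Bool),
    S = {x | ∀ i, if strict i then ∑ j, a i j * x j < b i else ∑ j, a i j * x j ≤ b i}

/-- `f` is a continuous `m`-piecewise linear function on `ℝ^d` with pieces `Ω` and affine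
functions `x ↦ ⟨a i, x⟩ + b i`. -/
def IsPWLWith {d : ℕ} (f : (Fin d → ℝ) → ℝ) (m : ℕ)
    (Ω : Fin m → Set (Fin d → ℝ)) (a : Fin m → Fin d → ℝ) (b : Fin m → ℝ) : Prop :=
  Continuous f ∧
  (∀ i, IsPolyhedralSet (Ω i)) ∧
  (∀ i j, i ≠ j → Disjoint (Ω i) (Ω j)) ∧
  (⋃ i, Ω i) = Set.univ ∧
  (∀ i, ∀ x ∈ Ω i, f x = ∑ j, a i j * x j + b i)

/-- There is a partition of `ℝ^d` into `M` polyhedral sets, refining the partition `Ω`,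
on each of which no difference `ℓ_i - ℓ_j` of two affine pieces changes sign. -/
def IsSignRefinement {d : ℕ} (m : ℕ) (Ω : Fin m → Set (Fin d → ℝ))
    (a : Fin m → Fin d → ℝ) (b : Fin m → ℝ) (M : ℕ) : Prop :=
  ∃ Ω' : Fin M → Set (Fin d → ℝ),
    (∀ p, IsPolyhedralSet (Ω' p)) ∧
    (∀ p q, p ≠ q → Disjoint (Ω' p) (Ω' q)) ∧
    (⋃ p, Ω' p) = Set.univ ∧
    (∀ p, ∃ i, Ω' p ⊆ Ω i) ∧
    (∀ p : Fin M, ∀ i j : Fin m,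
      (∀ x ∈ Ω' p, ∑ t, a i t * x t + b i ≤ ∑ t, a j t * x t + b j) ∨
      (∀ x ∈ Ω' p, ∑ t, a j t * x t + b j ≤ ∑ t, a i t * x t + b i))

/-- `f : ℝ → ℝ` is a continuous `m`-piecewise linear function: `ℝ` is partitioned into
`m` intervals on the `i`-th of which `f x = a i * x + b i`. -/
def IsPWLRealWith (f : ℝ → ℝ) (m : ℕ) (I : Fin m → Set ℝ) (a b : Fin m → ℝ) : Prop :=
  Continuous f ∧
  (∀ i, (I i).OrdConnected) ∧
  (∀ i j, i ≠ j → Disjoint (I i) (I j)) ∧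
  (⋃ i, I i) = Set.univ ∧
  (∀ i, ∀ x ∈ I i, f x = a i * x + b i)

def IsPWLReal (f : ℝ → ℝ) (m : ℕ) : Prop :=
  ∃ I a b, IsPWLRealWith f m I a b

/-!
Between any two points `x` and `y`, a continuous piecewise affine `f` has a piece that is at least
`f` at `x` and at most `f` at `y`. Hence, choosing in each cell a point `z` where the pieces not
above `f` on the whole cell are strictly below it, `f` is the maximum over the cells of the
minimum of the pieces that are at least `f` at `z`. By the Baire category theorem, pieces that
agree with `f` on no open set can be left out of this formula, and the remaining ones inherit
gradients of norm at most one from the Lipschitz condition, so that they can form the first layer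
of the network. Each maximum or minimum is computed by a knockout tournament, whose comparisons
are groups of size two.
-/

open Filter Topology NNReal

/-! ### Lattice representation of piecewise affine functions -/

section Agreement

variable {X Y ι : Type*} [TopologicalSpace X] [TopologicalSpace Y] [T2Space Y] [Finite ι]
  {f : X → Y} {g : ι → X → Y}

lemma exists_eq_of_frequently (hf : Continuous f) (hg : ∀ i, Continuous (g i))
    (hfg : ∀ x, ∃ i, f x = g i x) {p : X → Prop} {x : X} (hp : ∃ᶠ y in 𝓝 x, p y) :
    ∃ y i, p y ∧ f y = g i y ∧ f x = g i x := by
  have hpass : ∀ᶠ y in 𝓝 x, ∀ i, f y = g i y → f x = g i x := by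
    refine eventually_all.2 fun i => ?_
    by_cases hx : f x = g i x
    · exact .of_forall fun _ _ => hx
    · filter_upwards [(isOpen_ne_fun hf (hg i)).mem_nhds hx] with y hy hy'
      exact absurd hy' hy
  obtain ⟨y, hy, hyx⟩ := (hp.and_eventually hpass).exists
  obtain ⟨i, hi⟩ := hfg y
  exact ⟨y, i, hy, hi, hyx i hi⟩

lemma exists_eq_and_nonempty_interior [BaireSpace X] (hf : Continuous f)
    (hg : ∀ i, Continuous (g i)) (hfg : ∀ x, ∃ i, f x = g i x) (x : X) :
    ∃ i, f x = g i x ∧ (interior {y | f y = g i y}).Nonempty := by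
  have hclosed i : IsClosed {y | f y = g i y} := isClosed_eq hf (hg i)
  have hdense : Dense (⋃ i, interior {y | f y = g i y}) :=
    dense_iUnion_interior_of_closed hclosed
      (Set.eq_univ_of_forall fun y => Set.mem_iUnion.2 (hfg y))
  have hx := hdense x
  rw [closure_iUnion_of_finite, Set.mem_iUnion] at hx
  obtain ⟨i, hi⟩ := hx
  exact ⟨i, closure_minimal interior_subset (hclosed i) hi, closure_nonempty_iff.1 ⟨x, hi⟩⟩

end Agreement

section Crossing

variable {ι : Type*} [Finite ι]

/- The affine piece is the one through the first return of `h` to nonpositive values: it starts at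
zero and descends if that happens at once, and descends through a zero of `h` otherwise. -/
lemma exists_nonneg_and_nonpos_of_eq_lineMap {h : ℝ → ℝ} (hh : Continuous h) {u v : ι → ℝ}
    (huv : ∀ t, ∃ i, h t = AffineMap.lineMap (u i) (v i) t) (h0 : h 0 = 0) (h1 : h 1 = 0) :
    ∃ i, 0 ≤ u i ∧ v i ≤ 0 := by
  simp only [AffineMap.lineMap_apply_ring'] at huv
  let Z : Set ℝ := {t | 0 < t ∧ t ≤ 1 ∧ h t ≤ 0}
  let t₀ := sInf Z
  have h1Z : (1 : ℝ) ∈ Z := ⟨one_pos, le_rfl, h1.le⟩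
  have hbdd : BddBelow Z := ⟨0, fun t ht => ht.1.le⟩
  have ht₀ : t₀ ∈ closure Z := csInf_mem_closure ⟨1, h1Z⟩ hbdd
  have ht₀_nonneg : 0 ≤ t₀ := le_csInf ⟨1, h1Z⟩ fun t ht => ht.1.le
  have ht₀_le_one : t₀ ≤ 1 := csInf_le hbdd h1Z
  have hht₀ : h t₀ ≤ 0 :=
    closure_minimal (fun t ht => ht.2.2) (isClosed_le hh continuous_const) ht₀
  have hcommon {p : ℝ → Prop} (hp : ∃ᶠ t in 𝓝 t₀, p t) :=
    exists_eq_of_frequently hh (g := fun i t => t * (v i - u i) + u i)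
      (fun i => by fun_prop) huv hp
  rcases ht₀_nonneg.eq_or_lt with ht₀_zero | ht₀_pos
  · obtain ⟨t, i, ⟨ht, -, hht⟩, hit, hi₀⟩ := hcommon (mem_closure_iff_frequently.1 ht₀)
    rw [← ht₀_zero, h0] at hi₀
    have hui : u i = 0 := by linarith
    rw [hit, hui] at hht
    exact ⟨i, hui.ge, by nlinarith⟩
  · have hpos : ∃ᶠ t in 𝓝 t₀, 0 < t ∧ t < t₀ ∧ 0 < h t := by
      refine (Eventually.frequently (f := 𝓝[<] t₀) ?_).filter_mono nhdsWithin_le_nhds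
      filter_upwards [Ioo_mem_nhdsLT ht₀_pos] with t ht
      refine ⟨ht.1, ht.2, not_le.1 fun hht => ?_⟩
      exact ht.2.not_ge (csInf_le hbdd ⟨ht.1, ht.2.le.trans ht₀_le_one, hht⟩)
    obtain ⟨t, i, ⟨ht, htt₀, hht⟩, hit, hi₀⟩ := hcommon hpos
    have hslope : v i - u i < 0 := by
      rw [hit] at hht
      nlinarith
    exact ⟨i, by nlinarith, by nlinarith⟩

lemma exists_le_and_le_of_eq_affine {E : Type*} [AddCommGroup E] [Module ℝ E] [TopologicalSpace E]
    [IsTopologicalAddGroup E] [ContinuousSMul ℝ E] {f : E → ℝ} (hf : Continuous f)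
    {ℓ : ι → E →ᵃ[ℝ] ℝ} (hℓ : ∀ x, ∃ i, f x = ℓ i x) (x y : E) :
    ∃ i, f x ≤ ℓ i x ∧ ℓ i y ≤ f y := by
  let h : ℝ → ℝ := fun t => f (AffineMap.lineMap x y t) - AffineMap.lineMap (f x) (f y) t
  have hline : Continuous (AffineMap.lineMap x y : ℝ →ᵃ[ℝ] E) := AffineMap.lineMap_continuous
  have hh : Continuous h := (hf.comp hline).sub AffineMap.lineMap_continuous
  have hact t : ∃ i, h t = AffineMap.lineMap (ℓ i x - f x) (ℓ i y - f y) t := by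
    obtain ⟨i, hi⟩ := hℓ (AffineMap.lineMap x y t)
    refine ⟨i, ?_⟩
    simp only [h, hi, AffineMap.apply_lineMap, AffineMap.lineMap_apply_ring']
    ring
  obtain ⟨i, hx, hy⟩ :=
    exists_nonneg_and_nonpos_of_eq_lineMap hh hact (by simp [h]) (by simp [h])
  exact ⟨i, sub_nonneg.1 hx, sub_nonpos.1 hy⟩

end Crossing

section MaxMin

variable {E : Type*} [AddCommGroup E] [Module ℝ E]

lemma exists_range_eq_of_nonempty {α : Type*} {s : Set α} (hs : s.Nonempty) :
    ∃ r : α → α, Set.range r = s := by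
  classical
  obtain ⟨a, ha⟩ := hs
  refine ⟨fun i => if i ∈ s then i else a, subset_antisymm ?_ fun i hi => ⟨i, if_pos hi⟩⟩
  rintro _ ⟨i, rfl⟩
  dsimp only
  split_ifs with hi
  exacts [hi, ha]

/- Each convex function is strict at some point, and averaging two points keeps the strictness
available at either of them. -/
lemma exists_forall_neg_of_convexOn {ι : Type*} {s : Finset ι} {S : Set E} {g : ι → E → ℝ}
    (hS : S.Nonempty) (hg : ∀ i ∈ s, ConvexOn ℝ S (g i)) (hle : ∀ i ∈ s, ∀ x ∈ S, g i x ≤ 0)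
    (hlt : ∀ i ∈ s, ∃ x ∈ S, g i x < 0) : ∃ x ∈ S, ∀ i ∈ s, g i x < 0 := by
  classical
  induction s using Finset.induction_on with
  | empty => exact hS.imp fun x hx => ⟨hx, by simp⟩
  | insert i s _ ih =>
    simp only [Finset.forall_mem_insert] at hg hle hlt
    obtain ⟨x, hx, hxs⟩ := ih hg.2 hle.2 hlt.2
    obtain ⟨y, hy, hyi⟩ := hlt.1
    have hmid {φ : E → ℝ} (hφ : ConvexOn ℝ S φ) :
        φ ((1 / 2 : ℝ) • x + (1 / 2 : ℝ) • y) ≤ 1 / 2 * φ x + 1 / 2 * φ y := by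
      simpa only [smul_eq_mul] using
        hφ.2 hx hy (by norm_num : (0 : ℝ) ≤ 1 / 2) (by norm_num) (by norm_num)
    refine ⟨(1 / 2 : ℝ) • x + (1 / 2 : ℝ) • y,
      hg.1.1 hx hy (by norm_num) (by norm_num) (by norm_num), ?_⟩
    refine Finset.forall_mem_insert _ _ _ |>.2 ⟨?_, fun j hj => ?_⟩
    · linarith [hmid hg.1, hle.1 x hx]
    · linarith [hmid (hg.2 j hj), hxs j hj, hle.2 j hj y hy]

variable {ι : Type*}

lemma exists_forall_le_of_convex [Finite ι] {S : Set E} (hS : Convex ℝ S) {f : E → ℝ}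
    {ℓ : ι → E →ᵃ[ℝ] ℝ} {k : ι} (hf : ∀ x ∈ S, f x = ℓ k x)
    (hk : ∀ i, (∀ x ∈ S, ℓ i x ≤ ℓ k x) ∨ ∀ x ∈ S, ℓ k x ≤ ℓ i x) :
    ∃ z, ∀ x ∈ S, ∀ i, f z ≤ ℓ i z → f x ≤ ℓ i x := by
  classical
  have := Fintype.ofFinite ι
  rcases S.eq_empty_or_nonempty with rfl | hne
  · exact ⟨0, by simp⟩
  let s : Finset ι := {i | ∃ x ∈ S, (ℓ i - ℓ k) x < 0}
  have hs {i} : i ∈ s ↔ ∃ x ∈ S, ℓ i x < ℓ k x := by simp [s, sub_neg]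
  obtain ⟨z, hz, hzs⟩ := exists_forall_neg_of_convexOn (s := s) (g := fun i => ℓ i - ℓ k) hne
    (fun i _ => ((convexOn_id convex_univ).comp_affineMap (ℓ i - ℓ k)).subset
      (Set.subset_univ S) hS)
    (fun i hi x hx => by
      obtain ⟨y, hy, hlt⟩ := hs.1 hi
      exact sub_nonpos.2 ((hk i).resolve_right (fun h => (h y hy).not_gt hlt) x hx))
    (fun i hi => by simpa [s] using hi)
  refine ⟨z, fun x hx i hi => not_lt.1 fun hlt => ?_⟩
  rw [hf z hz] at hi
  rw [hf x hx] at hlt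
  exact hi.not_gt (sub_neg.1 (hzs i (hs.2 ⟨x, hx, hlt⟩)))

variable [TopologicalSpace E] [IsTopologicalAddGroup E] [ContinuousSMul ℝ E]

theorem exists_eq_sup'_inf' {κ : Type*} [Fintype ι] [Nonempty ι] [Fintype κ] [Nonempty κ]
    {f : E → ℝ} (hf : Continuous f) {ℓ : ι → E →ᵃ[ℝ] ℝ} {T : Set ι}
    (hT : ∀ x, ∃ i ∈ T, f x = ℓ i x) {z : κ → E}
    (hz : ∀ x, ∃ p, ∀ i, f (z p) ≤ ℓ i (z p) → f x ≤ ℓ i x) :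
    ∃ σ : κ → ι → ι, (∀ p u, σ p u ∈ T) ∧ ∀ x, f x =
      Finset.univ.sup' Finset.univ_nonempty fun p =>
        Finset.univ.inf' Finset.univ_nonempty fun u => ℓ (σ p u) x := by
  have hcross p y : ∃ i ∈ {i ∈ T | f (z p) ≤ ℓ i (z p)}, ℓ i y ≤ f y := by
    obtain ⟨i, hzi, hyi⟩ := exists_le_and_le_of_eq_affine hf (ℓ := fun i : T => ℓ i)
      (fun x => by simpa using hT x) (z p) y
    exact ⟨i, ⟨i.2, hzi⟩, hyi⟩
  choose σ hσ using fun p => exists_range_eq_of_nonempty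
    ((hcross p (z p)).imp fun _ => And.left)
  have hσT p u : σ p u ∈ {i ∈ T | f (z p) ≤ ℓ i (z p)} := hσ p ▸ Set.mem_range_self u
  refine ⟨σ, fun p u => (hσT p u).1, fun x => le_antisymm ?_ ?_⟩
  · obtain ⟨p, hp⟩ := hz x
    exact Finset.le_sup'_of_le _ (Finset.mem_univ p)
      (Finset.le_inf' _ _ fun u _ => hp _ (hσT p u).2)
  · refine Finset.sup'_le _ _ fun p _ => ?_
    obtain ⟨i, hi, hix⟩ := hcross p x
    rw [← hσ p] at hi
    obtain ⟨u, rfl⟩ := hi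
    exact Finset.inf'_le_of_le _ (Finset.mem_univ u) hix

end MaxMin

lemma norm_le_of_eventuallyEq_inner_add {E : Type*} [NormedAddCommGroup E] [InnerProductSpace ℝ E]
    {f : E → ℝ} {K : ℝ≥0} (hf : LipschitzWith K f) {a x : E} {b : ℝ}
    (h : f =ᶠ[𝓝 x] fun y => inner ℝ a y + b) : ‖a‖ ≤ K := by
  have hderiv : HasFDerivAt f (innerSL ℝ a) x :=
    ((innerSL ℝ a).hasFDerivAt.add_const b).congr_of_eventuallyEq h
  simpa only [innerSL_apply_norm] using hderiv.le_of_lipschitz hf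

/-! ### Networks as sequences of layers -/

namespace GroupSortNet

variable {k d : ℕ}

/-- The pre-activations of one layer of a network with input in `ℝ^d`, as functions of that
input. Bundling the width avoids casts between the widths of successive layers. -/
structure Layer (d : ℕ) where
  width : ℕ
  val : (Fin d → ℝ) → Fin width → ℝ

namespace Layer

/-- `L` can be the first layer of a network satisfying Assumption 1. -/
def IsFirst (L : Layer d) : Prop :=
  ∃ (V : Matrix (Fin L.width) (Fin d) ℝ) (c : Fin L.width → ℝ),
    (∀ r, ∑ j, V r j ^ 2 ≤ 1) ∧ ∀ x, L.val x = V *ᵥ x + c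

/-- `L'` can follow `L` in a network of grouping size `k` satisfying Assumption 1. -/
def Step (k : ℕ) (L L' : Layer d) : Prop :=
  k ∣ L.width ∧ ∃ (V : Matrix (Fin L'.width) (Fin L.width) ℝ) (c : Fin L'.width → ℝ),
    (∀ r, ∑ j, |V r j| ≤ 1) ∧ ∀ x, L'.val x = V *ᵥ groupSortFun k (L.val x) + c

/-- `Reachable k D s L` says that `L` is the layer following `D` hidden layers, of total width `s`,
of a network of grouping size `k` satisfying Assumption 1. -/
inductive Reachable (k : ℕ) : ℕ → ℕ → Layer d → Prop
  | first {L : Layer d} (hL : L.IsFirst) : Reachable k 0 0 L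
  | step {D s : ℕ} {L L' : Layer d} (hL : Reachable k D s L) (hLL' : L.Step k L') :
      Reachable k (D + 1) (s + L.width) L'

lemma Reachable.exists_seq {D s : ℕ} {L : Layer d} (h : Reachable k D s L) :
    ∃ 𝓛 : ℕ → Layer d, (𝓛 0).IsFirst ∧ (∀ i < D, (𝓛 i).Step k (𝓛 (i + 1))) ∧ 𝓛 D = L ∧
      ∑ i ∈ Finset.range D, (𝓛 i).width = s := by
  induction h with
  | @first L hL => exact ⟨fun _ => L, hL, by simp, rfl, by simp⟩
  | @step D s L L' _ hLL' ih =>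
    obtain ⟨𝓛, hfirst, hstep, rfl, hsum⟩ := ih
    have hle {i} (hi : i ≤ D) : Function.update 𝓛 (D + 1) L' i = 𝓛 i :=
      Function.update_of_ne (by omega) ..
    refine ⟨Function.update 𝓛 (D + 1) L', by rwa [hle D.zero_le], fun i hi => ?_,
      Function.update_self .., ?_⟩
    · rw [hle (Nat.le_of_lt_succ hi)]
      rcases (Nat.le_of_lt_succ hi).eq_or_lt with rfl | hi
      · rwa [Function.update_self]
      · rw [hle hi]
        exact hstep i hi
    · rw [Finset.sum_range_succ, hle le_rfl, ← hsum]
      exact congrArg (· + _) (Finset.sum_congr rfl fun i hi => by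
        rw [hle (Finset.mem_range.1 hi).le])

lemma IsFirst.neg {L : Layer d} (hL : L.IsFirst) : (⟨L.width, -L.val⟩ : Layer d).IsFirst := by
  obtain ⟨V, c, hV, hval⟩ := hL
  exact ⟨-V, -c, by simpa using hV, fun x => by
    simp only [Pi.neg_apply, hval, neg_mulVec, neg_add]⟩

lemma Step.neg {L L' : Layer d} (h : L.Step k L') : L.Step k ⟨L'.width, -L'.val⟩ := by
  obtain ⟨hk, V, c, hV, hval⟩ := h
  exact ⟨hk, -V, -c, by simpa using hV, fun x => by
    simp only [Pi.neg_apply, hval, neg_mulVec, neg_add]⟩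

lemma Reachable.neg {D s : ℕ} {L : Layer d} (h : Reachable k D s L) :
    Reachable k D s ⟨L.width, -L.val⟩ := by
  cases h with
  | first hL => exact .first hL.neg
  | step hL hLL' => exact .step hL hLL'.neg

end Layer

section OfLayers

variable {D : ℕ} {𝓛 : ℕ → Layer d}

/-- The network with hidden layers `𝓛 0, …, 𝓛 (D - 1)` and output layer `𝓛 D`; the layer of width
`d` numbered `0` in `GroupSortNet` is the input and has no counterpart in `𝓛`. -/
def ofLayers (D : ℕ) (𝓛 : ℕ → Layer d) (hdiv : ∀ i < D, k ∣ (𝓛 i).width) (hout : (𝓛 D).width = 1)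
    (V₀ : Matrix (Fin (𝓛 0).width) (Fin d) ℝ) (c₀ : Fin (𝓛 0).width → ℝ)
    (V : ∀ i, Matrix (Fin (𝓛 (i + 1)).width) (Fin (𝓛 i).width) ℝ)
    (c : ∀ i, Fin (𝓛 (i + 1)).width → ℝ) : GroupSortNet k d where
  depth := D + 1
  depth_pos := Nat.succ_pos D
  width
    | 0 => d
    | i + 1 => (𝓛 i).width
  width_in := rfl
  width_out := hout
  width_div
    | 0, h, _ => absurd h (by omega)
    | i + 1, _, h => hdiv i h
  V
    | 0 => V₀
    | i + 1 => V i
  c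
    | 0 => c₀
    | i + 1 => c i

variable {hdiv : ∀ i < D, k ∣ (𝓛 i).width} {hout : (𝓛 D).width = 1}
  {V₀ : Matrix (Fin (𝓛 0).width) (Fin d) ℝ} {c₀ : Fin (𝓛 0).width → ℝ}
  {V : ∀ i, Matrix (Fin (𝓛 (i + 1)).width) (Fin (𝓛 i).width) ℝ}
  {c : ∀ i, Fin (𝓛 (i + 1)).width → ℝ}

lemma ofLayers_eval (h₀ : ∀ x, (𝓛 0).val x = V₀ *ᵥ x + c₀)
    (hstep : ∀ i < D, ∀ x, (𝓛 (i + 1)).val x = V i *ᵥ groupSortFun k ((𝓛 i).val x) + c i)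
    (x : Fin d → ℝ) :
    (ofLayers D 𝓛 hdiv hout V₀ c₀ V c).eval x = (𝓛 D).val x ⟨0, hout ▸ one_pos⟩ := by
  set N := ofLayers D 𝓛 hdiv hout V₀ c₀ V c
  have hpre : ∀ i ≤ D, N.V i *ᵥ N.post x i + N.c i = (𝓛 i).val x := by
    intro i
    induction i with
    | zero => exact fun _ => (h₀ x).symm
    | succ i ih =>
      intro hi
      have hpost : N.post x (i + 1) = groupSortFun k ((𝓛 i).val x) :=
        congrArg (groupSortFun k) (ih (by omega))
      rw [hpost]
      exact (hstep i hi x).symm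
  exact congrFun (hpre D le_rfl) _

lemma ofLayers_size :
    (ofLayers D 𝓛 hdiv hout V₀ c₀ V c).size = ∑ i ∈ Finset.range D, (𝓛 i).width := by
  rw [Finset.range_eq_Ico]
  exact (Finset.sum_Ico_add' (ofLayers D 𝓛 hdiv hout V₀ c₀ V c).width 0 D 1).symm

lemma exists_bound_offsets (N : GroupSortNet k d) (D : ℕ) :
    ∃ K : ℝ, 0 ≤ K ∧ ∀ i < D, ∀ r, |N.c i r| ≤ K :=
  ⟨∑ i ∈ Finset.range D, ‖N.c i‖, by positivity, fun i hi r => (norm_le_pi_norm _ r).trans <|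
    Finset.single_le_sum (f := fun i => ‖N.c i‖) (fun _ _ => norm_nonneg _)
      (Finset.mem_range.2 hi)⟩

lemma ofLayers_assumption1 (h₀ : ∀ r, ∑ j, V₀ r j ^ 2 ≤ 1)
    (hV : ∀ i < D, ∀ r, ∑ j, |V i r j| ≤ 1) :
    (ofLayers D 𝓛 hdiv hout V₀ c₀ V c).Assumption1 := by
  refine ⟨h₀, ?_, exists_bound_offsets _ _⟩
  rintro (_ | i) hpos hi
  · omega
  · exact hV i (Nat.lt_of_succ_lt_succ hi)

end OfLayers

theorem Layer.Reachable.exists_net {D s : ℕ} {φ : (Fin d → ℝ) → ℝ}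
    (h : Reachable k D s (⟨1, fun x _ => φ x⟩ : Layer d)) :
    ∃ N : GroupSortNet k d, N.Assumption1 ∧ (∀ x, N.eval x = φ x) ∧ N.depth = D + 1 ∧
      N.size = s := by
  obtain ⟨𝓛, ⟨V₀, c₀, hV₀, hval₀⟩, hstep, hlast, rfl⟩ := h.exists_seq
  have hlayer (i : ℕ) : ∃ (V : Matrix (Fin (𝓛 (i + 1)).width) (Fin (𝓛 i).width) ℝ)
      (c : Fin (𝓛 (i + 1)).width → ℝ), i < D → (∀ r, ∑ j, |V r j| ≤ 1) ∧
        ∀ x, (𝓛 (i + 1)).val x = V *ᵥ groupSortFun k ((𝓛 i).val x) + c := by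
    by_cases hi : i < D
    · obtain ⟨-, V, c, hVc⟩ := hstep i hi
      exact ⟨V, c, fun _ => hVc⟩
    · exact ⟨0, 0, fun h => absurd h hi⟩
  choose V c hVc using hlayer
  have hval {L : Layer d} (hL : L = ⟨1, fun x _ => φ x⟩) (x : Fin d → ℝ) (r : Fin L.width) :
      L.val x r = φ x := by
    subst hL
    rfl
  refine ⟨ofLayers D 𝓛 (fun i hi => (hstep i hi).1) (by rw [hlast]) V₀ c₀ V c,
    ofLayers_assumption1 hV₀ fun i hi => (hVc i hi).1, fun x => ?_, rfl, ofLayers_size⟩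
  rw [ofLayers_eval hval₀ fun i hi => (hVc i hi).2]
  exact hval hlast x _

/-! ### Computing maxima and minima by pairwise comparisons -/

/-- Every finite family of functions from `P`, whatever its length, is the layer following `D`
hidden layers of total width `s` of a network satisfying Assumption 1: the hidden layers may
depend on the family, but their cost does not. -/
def Computes (k D s : ℕ) (P : Set ((Fin d → ℝ) → ℝ)) : Prop :=
  ∀ ⦃n : ℕ⦄ (F : Fin n → (Fin d → ℝ) → ℝ), (∀ r, F r ∈ P) →
    Layer.Reachable k D s (⟨n, fun x r => F r x⟩ : Layer d)

variable {D s : ℕ} {P Q : Set ((Fin d → ℝ) → ℝ)}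

lemma Computes.mono (hP : Computes k D s P) (hQP : Q ⊆ P) : Computes k D s Q :=
  fun _ F hF => hP F fun r => hQP (hF r)

lemma Computes.neg (hP : Computes k D s P) : Computes k D s (-P) :=
  fun _ F hF => by simpa only [Pi.neg_def, neg_neg] using (hP (-F) hF).neg

lemma Computes.exists_net (hP : Computes k D s P) {φ : (Fin d → ℝ) → ℝ} (hφ : φ ∈ P) :
    ∃ N : GroupSortNet k d, N.Assumption1 ∧ (∀ x, N.eval x = φ x) ∧ N.depth = D + 1 ∧
      N.size = s :=
  Layer.Reachable.exists_net (hP (fun _ => φ) fun _ => hφ)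

lemma computes_affine (k d : ℕ) :
    Computes k 0 0 {φ : (Fin d → ℝ) → ℝ | ∃ a b, ∑ j, a j ^ 2 ≤ 1 ∧ ∀ x, φ x = a ⬝ᵥ x + b} := by
  intro n F hF
  choose a b ha hF using hF
  exact .first ⟨of a, b, ha, fun x => funext fun r => hF r x⟩

lemma groupSortFun_finProdFinEquiv {n : ℕ} (y : Fin (n * k) → ℝ) (i : Fin n) (j : Fin k) :
    groupSortFun k y (finProdFinEquiv (i, j)) =
      ((fun l => y (finProdFinEquiv (i, l))) ∘ Tuple.sort fun l => y (finProdFinEquiv (i, l)))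
        j.rev := by
  have hdiv : (j + k * i : ℕ) / k = i := by
    rw [Nat.add_mul_div_left _ _ j.pos, Nat.div_eq_of_lt j.2, zero_add]
  have hmod : (j + k * i : ℕ) % k = j := by
    rw [Nat.add_mul_mod_self_left, Nat.mod_eq_of_lt j.2]
  have hlt (l : Fin k) : (i : ℕ) * k + l < n * k := by
    simpa [mul_comm, add_comm] using (finProdFinEquiv (i, l)).2
  have hgrp (l : Fin k) : (⟨i * k + l, hlt l⟩ : Fin (n * k)) = finProdFinEquiv (i, l) :=
    Fin.ext (by simp [mul_comm, add_comm])
  have hrev : (⟨k - 1 - j, by omega⟩ : Fin k) = j.rev := Fin.ext (by simp; omega)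
  simp only [groupSortFun, dif_pos j.pos, finProdFinEquiv_apply_val, hdiv, hmod, hlt, dif_pos,
    hgrp, hrev]

lemma Computes.sort {ι : Type*} [Fintype ι] (hP : Computes k D s P)
    {G : ι → Fin k → (Fin d → ℝ) → ℝ} (hG : ∀ i j, G i j ∈ P) :
    Computes k (D + 1) (s + Fintype.card ι * k) (Set.range fun (q : ι × Fin k) x =>
      ((fun l => G q.1 l x) ∘ Tuple.sort fun l => G q.1 l x) q.2) := by
  intro n F hF
  choose sel hsel using hF
  let e := (Fintype.equivFin ι).symm
  let hidden : Fin (Fintype.card ι * k) → (Fin d → ℝ) → ℝ := fun r =>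
    G (e (finProdFinEquiv.symm r).1) (finProdFinEquiv.symm r).2
  have hhidden (i : ι) (l : Fin k) (x : Fin d → ℝ) :
      hidden (finProdFinEquiv (e.symm i, l)) x = G i l x := by
    simp only [hidden, Equiv.symm_apply_apply, e.apply_symm_apply]
  let unit : Fin n → Fin (Fintype.card ι * k) := fun r =>
    finProdFinEquiv (e.symm (sel r).1, (sel r).2.rev)
  refine .step (hP hidden fun r => hG _ _) ⟨dvd_mul_left _ _,
    of fun r => Pi.single (unit r) 1, 0, fun r => ?_, fun x => funext fun r => ?_⟩
  · refine le_of_eq ?_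
    simp [Pi.single_apply, apply_ite abs]
  · simp [mulVec, unit, groupSortFun_finProdFinEquiv, hhidden, ← hsel r]

lemma comp_sort_fin_two_one (y : Fin 2 → ℝ) : (y ∘ Tuple.sort y) 1 = y 0 ⊔ y 1 := by
  have hle := Tuple.monotone_sort y (show (0 : Fin 2) ≤ 1 by decide)
  have hne : Tuple.sort y 0 ≠ Tuple.sort y 1 := by simp
  simp only [Function.comp_apply] at hle ⊢
  generalize Tuple.sort y 0 = u, Tuple.sort y 1 = v at *
  fin_cases u <;> fin_cases v <;> simp_all

lemma Computes.sup {ι : Type*} [Fintype ι] (hP : Computes 2 D s P)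
    {g h : ι → (Fin d → ℝ) → ℝ} (hg : ∀ i, g i ∈ P) (hh : ∀ i, h i ∈ P) :
    Computes 2 (D + 1) (s + Fintype.card ι * 2) (Set.range fun i => g i ⊔ h i) := by
  refine (hP.sort (G := fun i => ![g i, h i]) fun i => ?_).mono ?_
  · simp [Fin.forall_fin_two, hg, hh]
  · rintro _ ⟨i, rfl⟩
    exact ⟨(i, 1), funext fun x => comp_sort_fin_two_one _⟩

/-- The total number of inputs of the comparisons in a knockout tournament between `n`
competitors, where in each round an odd competitor out is compared with itself. -/
def tournamentSize : ℕ → ℕ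
  | 0 => 0
  | 1 => 0
  | n + 2 => (n + 3) / 2 * 2 + tournamentSize ((n + 3) / 2)

lemma tournamentSize_of_two_le :
    ∀ {n : ℕ}, 2 ≤ n → tournamentSize n = (n + 1) / 2 * 2 + tournamentSize ((n + 1) / 2)
  | n + 2, _ => by rw [tournamentSize]

lemma tournamentSize_le (n : ℕ) : tournamentSize n ≤ 3 * (n - 1) := by
  induction n using Nat.strong_induction_on with
  | _ n ih =>
    match n with
    | 0 | 1 => simp [tournamentSize]
    | 2 | 3 => simp [tournamentSize]
    | n + 4 =>
      have := ih ((n + 4 + 1) / 2) (by omega)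
      rw [tournamentSize_of_two_le (by omega)]
      omega

lemma exists_pairing (n : ℕ) :
    ∃ l r : Fin ((n + 1) / 2) → Fin n, ∀ i, ∃ u, l u = i ∨ r u = i := by
  refine ⟨fun u => ⟨2 * u, by omega⟩, fun u => ⟨min (2 * u + 1) (n - 1), by omega⟩,
    fun i => ⟨⟨i / 2, by omega⟩, ?_⟩⟩
  simp only [Fin.ext_iff]
  omega

lemma sup'_univ_eq_sup'_univ_sup {α ι κ : Type*} [SemilatticeSup α] [Fintype ι] [Nonempty ι]
    [Fintype κ] [Nonempty κ] {l r : κ → ι} (hlr : ∀ i, ∃ u, l u = i ∨ r u = i) (F : ι → α) :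
    Finset.univ.sup' Finset.univ_nonempty F =
      Finset.univ.sup' Finset.univ_nonempty fun u => F (l u) ⊔ F (r u) := by
  refine le_antisymm (Finset.sup'_le _ _ fun i _ => ?_) (Finset.sup'_le _ _ fun u _ =>
    sup_le (Finset.le_sup' F (Finset.mem_univ _)) (Finset.le_sup' F (Finset.mem_univ _)))
  obtain ⟨u, rfl | rfl⟩ := hlr i
  exacts [Finset.le_sup'_of_le _ (Finset.mem_univ u) le_sup_left,
    Finset.le_sup'_of_le _ (Finset.mem_univ u) le_sup_right]

theorem Computes.sup' {ι : Type*} [Fintype ι] {n : ℕ} [hn₀ : NeZero n] (hP : Computes 2 D s P)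
    {F : ι → Fin n → (Fin d → ℝ) → ℝ} (hF : ∀ i j, F i j ∈ P) :
    Computes 2 (D + Nat.clog 2 n) (s + Fintype.card ι * tournamentSize n)
      (Set.range fun i => Finset.univ.sup' Finset.univ_nonempty (F i)) := by
  induction n using Nat.strong_induction_on generalizing hn₀ D s P with
  | _ n ih =>
    obtain rfl | hn : n = 1 ∨ 2 ≤ n := by have := NeZero.pos n; omega
    · rw [Nat.clog_one_right, tournamentSize, Nat.mul_zero]
      refine hP.mono ?_
      rintro _ ⟨i, rfl⟩
      simpa using hF i 0
    obtain ⟨l, r, hlr⟩ := exists_pairing n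
    have : NeZero ((n + 1) / 2) := ⟨by omega⟩
    have hround := hP.sup (ι := ι × Fin ((n + 1) / 2)) (g := fun q => F q.1 (l q.2))
      (h := fun q => F q.1 (r q.2)) (fun _ => hF _ _) fun _ => hF _ _
    have hrest := ih ((n + 1) / 2) (by omega) hround
      (F := fun i u => F i (l u) ⊔ F i (r u)) fun i u => ⟨(i, u), rfl⟩
    simp only [sup'_univ_eq_sup'_univ_sup hlr]
    convert hrest using 1
    · rw [Nat.clog_of_two_le one_lt_two hn]
      exact Nat.add_right_comm D (Nat.clog 2 ((n + 1) / 2)) 1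
    · rw [tournamentSize_of_two_le hn, Fintype.card_prod, Fintype.card_fin]
      ring

lemma sup'_neg {α ι : Type*} [Lattice α] [AddGroup α] [AddLeftMono α] [AddRightMono α]
    {t : Finset ι} (ht : t.Nonempty) (F : ι → α) : t.sup' ht (-F) = -t.inf' ht F :=
  (map_finset_inf' (OrderIso.neg α) ht F).symm

theorem Computes.inf' {ι : Type*} [Fintype ι] {n : ℕ} [NeZero n] (hP : Computes 2 D s P)
    {F : ι → Fin n → (Fin d → ℝ) → ℝ} (hF : ∀ i j, F i j ∈ P) :
    Computes 2 (D + Nat.clog 2 n) (s + Fintype.card ι * tournamentSize n)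
      (Set.range fun i => Finset.univ.inf' Finset.univ_nonempty (F i)) := by
  refine (hP.neg.sup' (F := fun i => -F i) fun i j => by simpa using hF i j).neg.mono ?_
  rintro _ ⟨i, rfl⟩
  exact ⟨i, sup'_neg ..⟩

theorem exists_net_sup'_inf' {m M : ℕ} [NeZero m] [NeZero M] {a : Fin M → Fin m → Fin d → ℝ}
    (ha : ∀ p u, ∑ j, a p u j ^ 2 ≤ 1) (b : Fin M → Fin m → ℝ) :
    ∃ N : GroupSortNet 2 d, N.Assumption1 ∧
      (∀ x, N.eval x = Finset.univ.sup' Finset.univ_nonempty fun p =>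
        Finset.univ.inf' Finset.univ_nonempty fun u => a p u ⬝ᵥ x + b p u) ∧
      N.depth = Nat.clog 2 M + Nat.clog 2 m + 1 ∧ N.size ≤ 3 * (m * M - 1) := by
  have hmin := (computes_affine 2 d).inf' (F := fun p u x => a p u ⬝ᵥ x + b p u)
    fun p u => ⟨a p u, b p u, ha p u, fun _ => rfl⟩
  have hmax := hmin.sup' (ι := Unit) (F := fun _ p => _) fun _ p => ⟨p, rfl⟩
  obtain ⟨N, hN, heval, hdepth, hsize⟩ := hmax.exists_net ⟨(), rfl⟩
  refine ⟨N, hN, fun x => ?_, by rw [hdepth]; ring, ?_⟩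
  · simp only [heval, Finset.sup'_apply, Finset.inf'_apply]
  · have hm := NeZero.pos m
    have hM := NeZero.pos M
    calc N.size = M * tournamentSize m + tournamentSize M := by simp [hsize]
      _ ≤ M * (3 * (m - 1)) + 3 * (M - 1) := by gcongr <;> exact tournamentSize_le _
      _ = 3 * (m * M - 1) := by
        zify [hm, hM, Nat.mul_pos hm hM]
        ring

end GroupSortNet

/-! ### Piecewise affine functions on `ℝ^d` -/

section PiecewiseAffine

variable {d : ℕ}

/-- The affine piece `x ↦ ⟨a, x⟩ + b`, bundled as an affine map. -/
def affineForm (a : Fin d → ℝ) (b : ℝ) : (Fin d → ℝ) →ᵃ[ℝ] ℝ :=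
  (dotProductBilin ℝ ℝ a).toAffineMap + AffineMap.const ℝ (Fin d → ℝ) b

lemma affineForm_apply (a : Fin d → ℝ) (b : ℝ) (x : Fin d → ℝ) :
    affineForm a b x = ∑ j, a j * x j + b :=
  rfl

lemma IsPolyhedralSet.convex {S : Set (Fin d → ℝ)} (hS : IsPolyhedralSet S) : Convex ℝ S := by
  obtain ⟨n, a, b, strict, rfl⟩ := hS
  rw [Set.ofPred_forall]
  refine convex_iInter fun i => ?_
  have hlin : IsLinearMap ℝ fun x => a i ⬝ᵥ x := (dotProductBilin ℝ ℝ (a i)).isLinear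
  split_ifs
  exacts [convex_halfSpace_lt hlin (b i), convex_halfSpace_le hlin (b i)]

lemma lipschitzWith_comp_ofLp {K : ℝ≥0} {f : (Fin d → ℝ) → ℝ}
    (hf : ∀ x y : Fin d → ℝ, |f x - f y| ≤ K * √(∑ i, (x i - y i) ^ 2)) :
    LipschitzWith K fun x : EuclideanSpace ℝ (Fin d) => f x.ofLp :=
  .of_dist_le_mul fun x y => by
    simpa only [EuclideanSpace.dist_eq, Real.dist_eq, sq_abs] using hf x.ofLp y.ofLp

lemma sum_sq_le_of_lipschitzWith {K : ℝ≥0} {f : (Fin d → ℝ) → ℝ}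
    (hf : LipschitzWith K fun x : EuclideanSpace ℝ (Fin d) => f x.ofLp) {a : Fin d → ℝ} {b : ℝ}
    (h : (interior {x | f x = affineForm a b x}).Nonempty) : ∑ j, a j ^ 2 ≤ (K : ℝ) ^ 2 := by
  obtain ⟨x, hx⟩ := h
  have hlocal : (fun y : EuclideanSpace ℝ (Fin d) => f y.ofLp) =ᶠ[𝓝 (WithLp.toLp 2 x)]
      fun y => inner ℝ (WithLp.toLp 2 a) y + b := by
    filter_upwards [(PiLp.continuous_ofLp 2 _).continuousAt (mem_interior_iff_mem_nhds.1 hx)]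
      with y hy
    simpa [affineForm_apply, PiLp.inner_apply, mul_comm] using hy
  calc ∑ j, a j ^ 2 = ‖WithLp.toLp 2 a‖ ^ 2 := by simp [EuclideanSpace.norm_sq_eq]
    _ ≤ (K : ℝ) ^ 2 := by gcongr; exact norm_le_of_eventuallyEq_inner_add hf hlocal

theorem groupSortNet_represents_pwl_general {f : (Fin d → ℝ) → ℝ} {m M : ℕ}
    {a : Fin m → Fin d → ℝ} {b : Fin m → ℝ}
    (hlip : LipschitzWith 1 fun x : EuclideanSpace ℝ (Fin d) => f x.ofLp)
    {C : Fin M → Set (Fin d → ℝ)} (hconvex : ∀ p, Convex ℝ (C p)) (hcover : ⋃ p, C p = Set.univ)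
    (hactive : ∀ p, ∃ k, (∀ x ∈ C p, f x = affineForm (a k) (b k) x) ∧
      ∀ i, (∀ x ∈ C p, affineForm (a i) (b i) x ≤ affineForm (a k) (b k) x) ∨
        ∀ x ∈ C p, affineForm (a k) (b k) x ≤ affineForm (a i) (b i) x) :
    ∃ N : GroupSortNet 2 d, N.Assumption1 ∧ (∀ x, N.eval x = f x) ∧
      N.depth = Nat.clog 2 M + Nat.clog 2 m + 1 ∧ N.size ≤ 3 * (m * M - 1) := by
  have hmem x : ∃ p, x ∈ C p := Set.mem_iUnion.1 (hcover ▸ Set.mem_univ x)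
  choose k hk hcompare using hactive
  have : NeZero M := ⟨by rintro rfl; exact (hmem 0).elim fun p _ => p.elim0⟩
  have : NeZero m := ⟨by rintro rfl; exact (k 0).elim0⟩
  have hcont : Continuous f := hlip.continuous.comp (PiLp.continuous_toLp 2 _)
  have hpiece x : ∃ i, f x = affineForm (a i) (b i) x := (hmem x).imp' k fun p => hk p x
  choose z hz using fun p => exists_forall_le_of_convex
    (ℓ := fun i => affineForm (a i) (b i)) (hconvex p) (hk p) (hcompare p)
  obtain ⟨σ, hσ, hσf⟩ := exists_eq_sup'_inf' hcont (ℓ := fun i => affineForm (a i) (b i))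
    (T := {i | (interior {x | f x = affineForm (a i) (b i) x}).Nonempty})
    (fun x => (exists_eq_and_nonempty_interior hcont
      (fun i => (affineForm (a i) (b i)).continuous_of_finiteDimensional) hpiece x).imp
      fun _ => And.symm)
    (fun x => (hmem x).imp fun p hp => hz p x hp)
  obtain ⟨N, hN, heval, hdepth, hsize⟩ := GroupSortNet.exists_net_sup'_inf'
    (a := fun p u => a (σ p u))
    (fun p u => by simpa using sum_sq_le_of_lipschitzWith hlip (hσ p u)) fun p u => b (σ p u)
  exact ⟨N, hN, fun x => (heval x).trans (hσf x).symm, hdepth, hsize⟩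

end PiecewiseAffine

/-- Any `1`-Lipschitz (Euclidean norm) `m`-piecewise linear function `f : ℝ^d → ℝ` is
exactly represented by a GroupSort network of grouping size `2` satisfying Assumption 1,
with depth `⌈log₂ M⌉ + ⌈log₂ m⌉ + 1` and size at most `3mM + M - 1`, where `M` is the
number of polytopes in a sign-refining partition for the affine pieces of `f`. -/
theorem groupSortNet_represents_pwl {d : ℕ} (f : (Fin d → ℝ) → ℝ) (m : ℕ) (hm : 2 ≤ m)
    (Ω : Fin m → Set (Fin d → ℝ)) (a : Fin m → Fin d → ℝ) (b : Fin m → ℝ)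
    (hf : IsPWLWith f m Ω a b)
    (hlip : ∀ x y : Fin d → ℝ, |f x - f y| ≤ Real.sqrt (∑ i, (x i - y i) ^ 2))
    (M : ℕ) (hM : IsSignRefinement m Ω a b M) :
    ∃ N : GroupSortNet 2 d, N.Assumption1 ∧ (∀ x, N.eval x = f x) ∧
      N.depth = Nat.clog 2 M + Nat.clog 2 m + 1 ∧
      N.size ≤ 3 * m * M + M - 1 := by
  obtain ⟨-, -, -, -, hfΩ⟩ := hf
  obtain ⟨Ω', hpoly, -, hcover, hsub, hsign⟩ := hM
  obtain ⟨N, hN, heval, hdepth, hsize⟩ := groupSortNet_represents_pwl_general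
    (lipschitzWith_comp_ofLp (by simpa only [NNReal.coe_one, one_mul] using hlip))
    (fun p => (hpoly p).convex) hcover fun p =>
      (hsub p).imp fun k hk => ⟨fun x hx => hfΩ k x (hk hx), fun i => hsign p i k⟩
  refine ⟨N, hN, heval, hdepth, hsize.trans ?_⟩
  rw [mul_assoc]
  omega
end

section
/- Let f : ℝ^d → ℝ be 1-Lipschitz (Euclidean norm) and m_f-piecewise linear with convex subdomains Ω₁,…,Ω_{m_f}. Then there exists a GroupSort neural network of grouping size 2 satisfying Assumption 1 that represents f exactly, with depth 2⌈log₂(m_f)⌉ + 1 and size at most 3m_f² + m_f − 1. -/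
open Matrix

/-!
Let `Ω i` and `Ω j` be two pieces. The hypograph of `f` over `Ω i` and the strict epigraph of the
inf-convolution of `f` on `Ω j` with the norm are convex, and disjoint because `f` is `1`-Lipschitz.
A hyperplane separating them is the graph of a `1`-Lipschitz affine function which is above `f` on
`Ω i` and below `f` on `Ω j`. Calling it `ℓ i j`, we get `f = max_i min_j ℓ i j`: at a point of
`Ω k` the inner minimum is at least `f` for `i = k` and at most `f`, through `j = k`, for every `i`.

A layer of grouping size `2` replaces pairs of entries by their minimum and maximum, so a knock-out
tournament finds an extremum of `m` numbers in `⌈log₂ m⌉` layers and at most `3 (m - 1)` neurons.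
The network runs `m` tournaments side by side for the minima, then one for the maximum.
-/

section HahnBanach

variable {E : Type*} [AddCommGroup E] [Module ℝ E] [TopologicalSpace E] [IsTopologicalAddGroup E]
  [ContinuousSMul ℝ E]

theorem exists_affine_of_disjoint_hypograph {S : Set E} {f : E → ℝ} {U : Set (E × ℝ)}
    (hf : ConcaveOn ℝ S f) (hUc : Convex ℝ U) (hUo : IsOpen U)
    (hdisj : Disjoint U {p | p.1 ∈ S ∧ p.2 ≤ f p.1}) {x₀ : E} {t₀ : ℝ} (hx₀ : x₀ ∈ S)
    (hft₀ : f x₀ < t₀) (hU₀ : (x₀, t₀) ∈ U) :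
    ∃ (φ : StrongDual ℝ E) (c : ℝ), (∀ x ∈ S, f x ≤ φ x + c) ∧ ∀ p ∈ U, φ p.1 + c < p.2 := by
  obtain ⟨ψ, u, hlt, hge⟩ := geometric_hahn_banach_open hUc hUo hf.convex_hypograph hdisj
  set β : ℝ := ψ (0, 1) with hβ
  have hψ : ∀ x t, ψ (x, t) = ψ (x, 0) + t * β := fun x t => by
    rw [hβ, ← smul_eq_mul, ← map_smul, ← map_add]
    simp
  have hβ_neg : β < 0 := by
    have h := (hlt _ hU₀).trans_le (hge (x₀, f x₀) ⟨hx₀, le_rfl⟩)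
    rw [hψ x₀ t₀, hψ x₀ (f x₀)] at h
    nlinarith
  let φ : StrongDual ℝ E := (-β⁻¹) • ψ.comp (ContinuousLinearMap.inl ℝ E ℝ)
  have hφ : ∀ x, φ x + u / β = (u - ψ (x, 0)) / β := fun x => by
    simp only [φ, _root_.smul_apply, ContinuousLinearMap.comp_apply, ContinuousLinearMap.inl_apply,
      smul_eq_mul]
    ring
  refine ⟨φ, u / β, fun x hx => ?_, fun p hp => ?_⟩
  · rw [hφ, le_div_iff_of_neg hβ_neg]
    linarith [hge (x, f x) ⟨hx, le_rfl⟩, hψ x (f x)]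
  · rw [hφ, div_lt_iff_of_neg hβ_neg]
    linarith [hlt p hp, hψ p.1 p.2]

end HahnBanach

section Sandwich

variable {E : Type*} [SeminormedAddCommGroup E] [NormedSpace ℝ E]

theorem norm_le_of_forall_apply_le_add {φ : StrongDual ℝ E} {C K : ℝ} (hK : 0 ≤ K)
    (h : ∀ z, φ z ≤ C + K * ‖z‖) : ‖φ‖ ≤ K := by
  have hle : ∀ z, φ z ≤ K * ‖z‖ := by
    intro z
    by_contra! hz
    obtain ⟨n, hn⟩ := exists_nat_gt (C / (φ z - K * ‖z‖))
    rw [div_lt_iff₀ (sub_pos.2 hz)] at hn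
    have hscaled := h ((n : ℝ) • z)
    rw [map_smul, norm_smul, smul_eq_mul, Real.norm_natCast] at hscaled
    linarith
  refine φ.opNorm_le_bound hK fun z => abs_le.2 ⟨?_, hle z⟩
  have hneg := hle (-z)
  rw [map_neg, norm_neg] at hneg
  linarith

open scoped Pointwise in
theorem exists_affine_between {S T : Set E} {f g : E → ℝ} {K : ℝ} (hK : 0 ≤ K)
    (hf : ConcaveOn ℝ S f) (hg : ConvexOn ℝ T g) (hS : S.Nonempty) (hT : T.Nonempty)
    (hfg : ∀ x ∈ S, ∀ y ∈ T, f x ≤ g y + K * ‖x - y‖) :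
    ∃ (φ : StrongDual ℝ E) (c : ℝ), ‖φ‖ ≤ K ∧ (∀ x ∈ S, f x ≤ φ x + c) ∧
      ∀ y ∈ T, φ y + c ≤ g y := by
  -- `epigraph + cone` is the strict epigraph of the infimal convolution of `g` and `K * ‖·‖`.
  let cone : Set (E × ℝ) := {p | K * ‖p.1‖ < p.2}
  let epigraph : Set (E × ℝ) := {p | p.1 ∈ T ∧ g p.1 ≤ p.2}
  have hcone_open : IsOpen cone := isOpen_lt (by fun_prop) (by fun_prop)
  have hcone_convex : Convex ℝ cone := by
    simpa [cone] using (convexOn_univ_norm.smul hK).convex_strict_epigraph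
  have hmem : ∀ x, ∀ y ∈ T, ∀ t, g y + K * ‖x - y‖ < t → (x, t) ∈ epigraph + cone :=
    fun x y hy t ht => ⟨(y, g y), ⟨hy, le_rfl⟩, (x - y, t - g y), lt_sub_iff_add_lt'.2 ht, by simp⟩
  have hdisj : Disjoint (epigraph + cone) {p : E × ℝ | p.1 ∈ S ∧ p.2 ≤ f p.1} := by
    rw [Set.disjoint_left]
    rintro _ ⟨⟨y, s⟩, ⟨hy, hs⟩, ⟨z, r⟩, hr, rfl⟩ ⟨hx, ht⟩
    have hle := hfg (y + z) hx y hy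
    rw [add_sub_cancel_left] at hle
    simp only [cone, Set.mem_ofPred_eq, Prod.mk_add_mk] at hr hs ht
    linarith
  obtain ⟨x₀, hx₀⟩ := hS
  obtain ⟨y₀, hy₀⟩ := hT
  have hlt := lt_add_one (g y₀ + K * ‖x₀ - y₀‖)
  obtain ⟨φ, c, hφS, hφ⟩ := exists_affine_of_disjoint_hypograph hf
    (hg.convex_epigraph.add hcone_convex) hcone_open.add_left hdisj hx₀
    ((hfg x₀ hx₀ y₀ hy₀).trans_lt hlt) (hmem x₀ y₀ hy₀ _ hlt)
  have hφT : ∀ x, ∀ y ∈ T, φ x + c ≤ g y + K * ‖x - y‖ := fun x y hy =>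
    le_of_forall_gt fun t ht => hφ _ (hmem x y hy t ht)
  refine ⟨φ, c, norm_le_of_forall_apply_le_add (C := g y₀ + K * ‖y₀‖ - c) hK fun z => ?_, hφS,
    fun y hy => by simpa using hφT y y hy⟩
  nlinarith [hφT z y₀ hy₀, norm_sub_le z y₀]

theorem exists_nonempty_superset_convexOn_concaveOn {S : Set E} {f : E → ℝ}
    (hvex : ConvexOn ℝ S f) (hcave : ConcaveOn ℝ S f) :
    ∃ S', S ⊆ S' ∧ S'.Nonempty ∧ ConvexOn ℝ S' f ∧ ConcaveOn ℝ S' f := by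
  rcases S.eq_empty_or_nonempty with rfl | hS
  · refine ⟨{0}, Set.empty_subset _, Set.singleton_nonempty _, ⟨convex_singleton _, ?_⟩,
      convex_singleton _, ?_⟩ <;>
    · rintro x rfl y rfl a b - - hab
      simp [← add_mul, hab]
  · exact ⟨S, subset_rfl, hS, hvex, hcave⟩

theorem exists_iSup_iInf_affine_eq {ι : Type*} [Finite ι] {Ω : ι → Set E} {f : E → ℝ} {K : ℝ}
    (hK : 0 ≤ K) (hcover : ⋃ i, Ω i = Set.univ) (hvex : ∀ i, ConvexOn ℝ (Ω i) f)
    (hcave : ∀ i, ConcaveOn ℝ (Ω i) f) (hf : ∀ x y, f x ≤ f y + K * ‖x - y‖) :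
    ∃ (φ : ι → ι → StrongDual ℝ E) (c : ι → ι → ℝ), (∀ i j, ‖φ i j‖ ≤ K) ∧
      ∀ x, f x = ⨆ i, ⨅ j, (φ i j x + c i j) := by
  -- Empty pieces are enlarged, since the separating hyperplane could be vertical for an empty set.
  choose Ω' hsub hne hvex' hcave' using fun i =>
    exists_nonempty_superset_convexOn_concaveOn (hvex i) (hcave i)
  choose φ c hφ hlower hupper using fun i j =>
    exists_affine_between hK (hcave' i) (hvex' j) (hne i) (hne j) fun x _ y _ => hf x y
  refine ⟨φ, c, hφ, fun x => ?_⟩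
  obtain ⟨k, hk⟩ := Set.mem_iUnion.1 (hcover ▸ Set.mem_univ x)
  have : Nonempty ι := ⟨k⟩
  refine le_antisymm ?_ (ciSup_le fun i => ?_)
  · exact le_ciSup_of_le (Set.finite_range _).bddAbove k
      (le_ciInf fun j => hlower k j x (hsub k hk))
  · exact ciInf_le_of_le (Set.finite_range _).bddBelow k (hupper i k x (hsub k hk))

end Sandwich

theorem exists_iSup_iInf_dotProduct_eq {ι : Type*} [Finite ι] {d : ℕ} {Ω : ι → Set (Fin d → ℝ)}
    {a : ι → Fin d → ℝ} {b : ι → ℝ} {f : (Fin d → ℝ) → ℝ} {K : ℝ} (hK : 0 ≤ K)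
    (hconv : ∀ i, Convex ℝ (Ω i)) (hcover : ⋃ i, Ω i = Set.univ)
    (haff : ∀ i, ∀ x ∈ Ω i, f x = ∑ j, a i j * x j + b i)
    (hlip : ∀ x y : Fin d → ℝ, |f x - f y| ≤ K * Real.sqrt (∑ i, (x i - y i) ^ 2)) :
    ∃ (v : ι → ι → Fin d → ℝ) (c : ι → ι → ℝ), (∀ i j, ∑ t, v i j t ^ 2 ≤ K ^ 2) ∧
      ∀ x, f x = ⨆ i, ⨅ j, (v i j ⬝ᵥ x + c i j) := by
  let e : EuclideanSpace ℝ (Fin d) →ₗ[ℝ] (Fin d → ℝ) :=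
    (WithLp.linearEquiv 2 ℝ (Fin d → ℝ)).toLinearMap
  have hvex : ∀ i, ConvexOn ℝ (Ω i) f ∧ ConcaveOn ℝ (Ω i) f := by
    intro i
    let ℓ : (Fin d → ℝ) →ₗ[ℝ] ℝ := dotProductBilin ℝ ℝ (a i)
    have heq : Set.EqOn (fun x => ℓ x + b i) f (Ω i) := fun x hx => (haff i x hx).symm
    exact ⟨((ℓ.convexOn (hconv i)).add_const (b i)).congr heq,
      ((ℓ.concaveOn (hconv i)).add_const (b i)).congr heq⟩
  obtain ⟨φ, c, hφ, hrep⟩ := exists_iSup_iInf_affine_eq (E := EuclideanSpace ℝ (Fin d))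
    (Ω := fun i => e ⁻¹' Ω i) (f := f ∘ e) hK
    (by rw [← Set.preimage_iUnion, hcover, Set.preimage_univ])
    (fun i => (hvex i).1.comp_linearMap e) (fun i => (hvex i).2.comp_linearMap e) fun x y => by
      rw [EuclideanSpace.norm_eq]
      simpa [e] using sub_le_iff_le_add'.1 ((le_abs_self _).trans (hlip (e x) (e y)))
  let v i j := (InnerProductSpace.toDual ℝ (EuclideanSpace ℝ (Fin d))).symm (φ i j)
  refine ⟨fun i j => (v i j).ofLp, c, fun i j => ?_, fun x => ?_⟩
  · rw [← EuclideanSpace.real_norm_sq_eq, LinearIsometryEquiv.norm_map]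
    exact pow_le_pow_left₀ (norm_nonneg _) (hφ i j) 2
  · have hv : ∀ i j, (v i j).ofLp ⬝ᵥ x = φ i j (WithLp.toLp 2 x) := fun i j => by
      rw [← InnerProductSpace.toDual_symm_apply, EuclideanSpace.inner_eq_star_dotProduct,
        dotProduct_comm]
      rfl
    simp only [hv]
    exact hrep (WithLp.toLp 2 x)

section Sorting

variable {k : ℕ}

/-- The decreasing rearrangement of `g`, that is, the action of the GroupSort activation on a
single group. -/
noncomputable def descSort (g : Fin k → ℝ) : Fin k → ℝ :=
  fun b => g (Tuple.sort g b.rev)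

theorem antitone_descSort (g : Fin k → ℝ) : Antitone (descSort g) :=
  (Tuple.monotone_sort g).comp_antitone Fin.rev_anti

theorem groupSortFun_finProdFinEquiv {p : ℕ} (x : Fin (p * k) → ℝ) (q : Fin p) (b : Fin k) :
    groupSortFun k x (finProdFinEquiv (q, b)) =
      descSort (fun c => x (finProdFinEquiv (q, c))) b := by
  have hk : 0 < k := b.pos
  have hmod : (b + k * q : ℕ) % k = b := by
    rw [Nat.add_mul_mod_self_left, Nat.mod_eq_of_lt b.isLt]
  have hdiv : (b + k * q : ℕ) / k = q := by
    rw [Nat.add_mul_div_left _ _ hk, Nat.div_eq_of_lt b.isLt, zero_add]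
  have hgroup : (fun c : Fin k => if h : (q : ℕ) * k + c < p * k then x ⟨q * k + c, h⟩ else 0) =
      fun c => x (finProdFinEquiv (q, c)) := by
    funext c
    have hval : (q : ℕ) * k + c = finProdFinEquiv (q, c) := by
      rw [finProdFinEquiv_apply_val, mul_comm, add_comm]
    rw [dif_pos (hval ▸ (finProdFinEquiv (q, c)).isLt)]
    exact congrArg x (Fin.ext hval)
  simp only [groupSortFun, dif_pos hk, finProdFinEquiv_apply_val, hdiv, hmod, hgroup]
  have hrev : k - 1 - (b : ℕ) = b.rev := by
    rw [Fin.val_rev]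
    omega
  exact congrArg (_ ∘ Tuple.sort _) (Fin.ext hrev)

/-- The supremum of `y` for `b = 0` and the infimum for `b = 1`. The index is the position in a
sorted pair, so that maxima and minima can be treated simultaneously. -/
noncomputable def extremum {ι : Type*} (b : Fin 2) (y : ι → ℝ) : ℝ :=
  if b = 0 then ⨆ i, y i else ⨅ i, y i

theorem extremum_zero {ι : Type*} (y : ι → ℝ) : extremum 0 y = ⨆ i, y i :=
  if_pos rfl

theorem extremum_one {ι : Type*} (y : ι → ℝ) : extremum 1 y = ⨅ i, y i :=
  if_neg one_ne_zero

theorem extremum_comp_of_surjective {ι κ : Type*} {s : ι → κ} (hs : Function.Surjective s)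
    (b : Fin 2) (y : κ → ℝ) : extremum b (y ∘ s) = extremum b y := by
  unfold extremum
  congr 1
  exacts [hs.iSup_comp y, hs.iInf_comp y]

theorem extremum_prod {ι κ : Type*} [Finite ι] [Finite κ] (b : Fin 2)
    (y : ι × κ → ℝ) : extremum b y = extremum b fun i => extremum b fun j => y (i, j) := by
  unfold extremum
  split_ifs
  · exact ciSup_prod (Set.finite_range y).bddAbove
  · exact ciInf_prod (Set.finite_range y).bddBelow

theorem extremum_unique {ι : Type*} [Unique ι] (b : Fin 2) (y : ι → ℝ) :
    extremum b y = y default := by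
  unfold extremum
  rw [ciSup_unique, ciInf_unique, ite_self]

theorem descSort_two (g : Fin 2 → ℝ) (b : Fin 2) : descSort g b = extremum b g := by
  have hs : Function.Surjective fun b : Fin 2 => Tuple.sort g b.rev :=
    (Tuple.sort g).surjective.comp Fin.rev_surjective
  rw [← extremum_comp_of_surjective hs]
  change descSort g b = extremum b (descSort g)
  fin_cases b
  · exact le_antisymm (le_ciSup (Set.finite_range _).bddAbove 0)
      (ciSup_le fun c => antitone_descSort g (Fin.zero_le c))
  · exact le_antisymm (le_ciInf fun c => antitone_descSort g (Fin.le_last c))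
      (ciInf_le (Set.finite_range _).bddBelow 1)

end Sorting

namespace GroupSortNet

variable {k d p : ℕ}

/-- The network of depth `1` computing `x ↦ v ⬝ᵥ x + β`. -/
def ofAffine (k : ℕ) (v : Fin d → ℝ) (β : ℝ) : GroupSortNet k d where
  depth := 1
  depth_pos := le_rfl
  width | 0 => d | _ + 1 => 1
  width_in := rfl
  width_out := rfl
  width_div i h₁ h₂ := absurd h₁ (by omega)
  V | 0 => fun _ => v | _ + 1 => 0
  c | 0 => fun _ => β | _ + 1 => 0

/-- The network whose first affine layer is `x ↦ A *ᵥ x + β` and whose remaining layers are those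
of `N`. -/
def cons (A : Matrix (Fin p) (Fin d) ℝ) (β : Fin p → ℝ) (hk : k ∣ p) (N : GroupSortNet k p) :
    GroupSortNet k d where
  depth := N.depth + 1
  depth_pos := Nat.le_add_left _ _
  width | 0 => d | i + 1 => N.width i
  width_in := rfl
  width_out := N.width_out
  width_div
    | 0, h, _ => absurd h (by omega)
    | 1, _, _ => by rwa [← N.width_in] at hk
    | i + 2, _, h => N.width_div (i + 1) (by omega) (by omega)
  V | 0 => A.submatrix (Fin.cast N.width_in) id | i + 1 => N.V i
  c | 0 => β ∘ Fin.cast N.width_in | i + 1 => N.c i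

theorem eval_ofAffine (v : Fin d → ℝ) (β : ℝ) (x : Fin d → ℝ) :
    (ofAffine k v β).eval x = v ⬝ᵥ x + β :=
  rfl

theorem eval_cons (A : Matrix (Fin p) (Fin d) ℝ) (β : Fin p → ℝ) (hk : k ∣ p)
    (N : GroupSortNet k p) (x : Fin d → ℝ) :
    (cons A β hk N).eval x = N.eval (groupSortFun k (A *ᵥ x + β)) := by
  have hpost : ∀ i, (cons A β hk N).post x (i + 1) = N.post (groupSortFun k (A *ᵥ x + β)) i := by
    intro i
    induction i with
    | zero =>
      obtain ⟨_, _, _, rfl, _, _, _, _⟩ := N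
      rfl
    | succ i ih => exact congrArg (fun z => groupSortFun k (N.V i *ᵥ z + N.c i)) ih
  obtain ⟨_ | D, hD, _, rfl, _, _, V, c⟩ := N
  · omega
  · exact congrFun (congrArg (fun z => V D *ᵥ z + c D) (hpost D)) _

theorem size_eq_sum_range (N : GroupSortNet k d) :
    N.size = ∑ i ∈ Finset.range (N.depth - 1), N.width (i + 1) := by
  rw [size, ← Finset.Ico_add_one_right_eq_Icc, Finset.sum_Ico_eq_sum_range, Nat.add_sub_cancel]
  simp only [add_comm]

theorem size_cons (A : Matrix (Fin p) (Fin d) ℝ) (β : Fin p → ℝ) (hk : k ∣ p)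
    (N : GroupSortNet k p) : (cons A β hk N).size = p + N.size := by
  have hdepth : (cons A β hk N).depth - 1 = N.depth - 1 + 1 :=
    (Nat.sub_add_cancel N.depth_pos).symm
  rw [size_eq_sum_range, hdepth, Finset.sum_range_succ', add_comm, size_eq_sum_range]
  exact congrArg (· + _) N.width_in

theorem exists_forall_abs_c_le (N : GroupSortNet k d) :
    ∃ K : ℝ, 0 ≤ K ∧ ∀ i, i < N.depth → ∀ r, |N.c i r| ≤ K := by
  obtain ⟨K, hK⟩ := (Set.finite_range fun p : (i : Fin N.depth) × Fin (N.width (i + 1)) =>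
    |N.c p.1 p.2|).bddAbove
  exact ⟨max K 0, le_max_right K 0, fun i hi r => (hK ⟨⟨⟨i, hi⟩, r⟩, rfl⟩).trans (le_max_left K 0)⟩

end GroupSortNet

/-- `Φ`, applied to arbitrary affine forms, is computed by a GroupSort network with `L` hidden
layers of total width `S`. The rows of the first layer are taken from the given affine forms and
the later rows have `ℓ¹`-norm at most `1`, so that whichever norm bound the affine forms satisfy is
inherited by the first layer. -/
def GroupSortRealizable (k : ℕ) {κ : Type*} (Φ : (κ → ℝ) → ℝ) (L S : ℕ) : Prop :=
  ∀ (d : ℕ) (A : κ → Fin d → ℝ) (β : κ → ℝ), ∃ N : GroupSortNet k d,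
    N.depth = L + 1 ∧ N.size = S ∧
    (∀ r, ∃ i, ∀ j, N.V 0 r j = A i (Fin.cast N.width_in j)) ∧
    (∀ i, 1 ≤ i → i < N.depth → ∀ r, ∑ j, |N.V i r j| ≤ 1) ∧
    ∀ x, N.eval x = Φ fun i => A i ⬝ᵥ x + β i

namespace GroupSortRealizable

variable {k L S : ℕ} {κ : Type*}

theorem coord (k : ℕ) (i : κ) : GroupSortRealizable k (fun y : κ → ℝ => y i) 0 0 := fun _ A β =>
  ⟨.ofAffine k (A i) (β i), rfl, rfl, fun _ => ⟨i, fun _ => rfl⟩, fun _ h h' => absurd h h'.not_ge,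
    GroupSortNet.eval_ofAffine (A i) (β i)⟩

theorem reindex {κ' : Type*} {Φ : (κ → ℝ) → ℝ} (hΦ : GroupSortRealizable k Φ L S) (s : κ → κ') :
    GroupSortRealizable k (fun y : κ' → ℝ => Φ (y ∘ s)) L S := fun _ A β => by
  obtain ⟨N, hdepth, hsize, hfirst, hrest, heval⟩ := hΦ _ (A ∘ s) (β ∘ s)
  exact ⟨N, hdepth, hsize, fun r => (hfirst r).imp' s fun _ => id, hrest, heval⟩

theorem comp_descSort {ρ : Type*} [Fintype ρ] {Φ : (ρ × Fin k → ℝ) → ℝ}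
    (hΦ : GroupSortRealizable k Φ L S) :
    GroupSortRealizable k (fun y : ρ × Fin k → ℝ => Φ fun p => descSort (fun c => y (p.1, c)) p.2)
      (L + 1) (Fintype.card ρ * k + S) := fun _ A β => by
  let e : ρ × Fin k ≃ Fin (Fintype.card ρ * k) :=
    ((Fintype.equivFin ρ).prodCongr (Equiv.refl (Fin k))).trans finProdFinEquiv
  obtain ⟨N, hdepth, hsize, hfirst, hrest, heval⟩ := hΦ _ (fun p => Pi.single (e p) 1) 0
  let N' := GroupSortNet.cons (.of (A ∘ e.symm)) (β ∘ e.symm) (Nat.dvd_mul_left k _) N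
  refine ⟨N', congrArg (· + 1) hdepth, ?_, fun r => ⟨_, fun j => rfl⟩, ?_, fun x => ?_⟩
  · rw [GroupSortNet.size_cons, hsize]
  · rintro (_ | _ | i) hi hlt r
    · omega
    · obtain ⟨p, hp⟩ := hfirst r
      change ∑ j, |N.V 0 r j| ≤ 1
      simp only [hp]
      refine ((finCongr N.width_in).sum_comp fun j => |(Pi.single (e p) 1 : _ → ℝ) j|).trans_le ?_
      simp [Pi.single_apply, apply_ite abs]
    · exact hrest (i + 1) (by omega) (Nat.lt_of_succ_lt_succ hlt) r
  · rw [GroupSortNet.eval_cons, heval]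
    refine congrArg Φ (funext fun p => ?_)
    rw [single_one_dotProduct, Pi.zero_apply, add_zero]
    change groupSortFun k _ (finProdFinEquiv (Fintype.equivFin ρ p.1, p.2)) = _
    rw [groupSortFun_finProdFinEquiv]
    refine congrArg (descSort · p.2) (funext fun c => ?_)
    change A (e.symm (e (p.1, c))) ⬝ᵥ x + β (e.symm (e (p.1, c))) = _
    rw [e.symm_apply_apply]

theorem comp_extremum_of_surjective {n h : ℕ} {b : Fin 2} [Fintype κ] {Φ : (κ → ℝ) → ℝ}
    {s : Fin h × Fin 2 → Fin n} (hs : Function.Surjective s)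
    (hΦ : GroupSortRealizable 2
      (fun y : κ × Fin h → ℝ => Φ fun i => extremum b fun q => y (i, q)) L S) :
    GroupSortRealizable 2 (fun y : κ × Fin n → ℝ => Φ fun i => extremum b fun j => y (i, j))
      (L + 1) (Fintype.card (κ × Fin h) * 2 + S) := by
  convert ((hΦ.reindex fun p => (p, b)).comp_descSort (ρ := κ × Fin h)).reindex
    fun p : (κ × Fin h) × Fin 2 => (p.1.1, s (p.1.2, p.2)) using 4 with y i
  rw [← extremum_comp_of_surjective hs, extremum_prod]
  simp only [Function.comp_apply, descSort_two]

end GroupSortRealizable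

/-- The number of neurons used to find the extremum of `n` numbers by a knock-out tournament, each
round of which sorts the remaining numbers in pairs. -/
def tournamentSize (n : ℕ) : ℕ :=
  if h : 2 ≤ n then (n + 1) / 2 * 2 + tournamentSize ((n + 1) / 2) else 0

theorem tournamentSize_of_two_le {n : ℕ} (hn : 2 ≤ n) :
    tournamentSize n = (n + 1) / 2 * 2 + tournamentSize ((n + 1) / 2) := by
  rw [tournamentSize, dif_pos hn]

theorem tournamentSize_one : tournamentSize 1 = 0 := by
  rw [tournamentSize, dif_neg (by decide)]

theorem tournamentSize_le {n : ℕ} (hn : 1 ≤ n) : tournamentSize n ≤ 3 * (n - 1) := by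
  induction n using Nat.strong_induction_on with
  | _ n ih =>
    rcases hn.eq_or_lt with rfl | hn
    · exact tournamentSize_one.le
    rw [tournamentSize_of_two_le hn]
    have hhalf := ih ((n + 1) / 2) (by omega) (by omega)
    obtain rfl | hn3 := eq_or_ne n 3
    · norm_num [tournamentSize_of_two_le, tournamentSize_one]
    · omega

theorem GroupSortRealizable.comp_extremum {L S : ℕ} {κ : Type*} [Fintype κ] {Φ : (κ → ℝ) → ℝ}
    (hΦ : GroupSortRealizable 2 Φ L S) (b : Fin 2) {n : ℕ} (hn : 1 ≤ n) :
    GroupSortRealizable 2 (fun y : κ × Fin n → ℝ => Φ fun i => extremum b fun j => y (i, j))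
      (L + Nat.clog 2 n) (S + Fintype.card κ * tournamentSize n) := by
  induction n using Nat.strong_induction_on with
  | _ n ih =>
    rcases hn.eq_or_lt with rfl | hn
    · simp only [extremum_unique, tournamentSize_one, Nat.clog_one_right, mul_zero, add_zero]
      exact hΦ.reindex fun i => (i, default)
    have hcard : Fintype.card (Fin n) ≤ Fintype.card (Fin ((n + 1) / 2) × Fin 2) := by
      simp only [Fintype.card_prod, Fintype.card_fin]
      omega
    obtain ⟨s⟩ := Function.Embedding.nonempty_of_card_le hcard
    have : NeZero n := ⟨by omega⟩
    have hround := (ih ((n + 1) / 2) (by omega) (by omega)).comp_extremum_of_surjective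
      (Function.invFun_surjective s.injective)
    rw [Nat.clog_of_two_le one_lt_two hn, tournamentSize_of_two_le hn]
    convert hround using 1
    · rfl
    · rw [Fintype.card_prod, Fintype.card_fin]
      ring

theorem groupSortRealizable_iSup_iInf {m : ℕ} (hm : 1 ≤ m) :
    GroupSortRealizable 2 (fun y : Fin m × Fin m → ℝ => ⨆ i, ⨅ j, y (i, j)) (2 * Nat.clog 2 m)
      ((m + 1) * tournamentSize m) := by
  have hsup : GroupSortRealizable 2 (fun y : Fin m → ℝ => ⨆ i, y i) (Nat.clog 2 m)
      (tournamentSize m) := by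
    simpa [extremum_zero] using
      ((GroupSortRealizable.coord 2 ()).comp_extremum 0 hm).reindex
        (Prod.snd : Unit × Fin m → Fin m)
  have hinf := hsup.comp_extremum 1 hm
  simp only [extremum_one, Fintype.card_fin, ← two_mul, ← add_one_mul, add_comm _ (m * _)] at hinf
  exact hinf

theorem groupSortNet_represents_pwl_convex_general {d m : ℕ} {f : (Fin d → ℝ) → ℝ}
    {Ω : Fin m → Set (Fin d → ℝ)} {a : Fin m → Fin d → ℝ} {b : Fin m → ℝ}
    (hconv : ∀ i, Convex ℝ (Ω i)) (hcover : ⋃ i, Ω i = Set.univ)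
    (haff : ∀ i, ∀ x ∈ Ω i, f x = ∑ j, a i j * x j + b i)
    (hlip : ∀ x y : Fin d → ℝ, |f x - f y| ≤ Real.sqrt (∑ i, (x i - y i) ^ 2)) :
    ∃ N : GroupSortNet 2 d, N.Assumption1 ∧ (∀ x, N.eval x = f x) ∧
      N.depth = 2 * Nat.clog 2 m + 1 ∧ N.size ≤ 3 * m ^ 2 + m - 1 := by
  obtain ⟨i₀, -⟩ := Set.mem_iUnion.1 (hcover ▸ Set.mem_univ (0 : Fin d → ℝ))
  have hm : 1 ≤ m := i₀.pos
  obtain ⟨v, c, hv, hrep⟩ := exists_iSup_iInf_dotProduct_eq zero_le_one hconv hcover haff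
    (by simpa only [one_mul] using hlip)
  obtain ⟨N, hdepth, hsize, hfirst, hrest, heval⟩ :=
    groupSortRealizable_iSup_iInf hm d (fun p => v p.1 p.2) (fun p => c p.1 p.2)
  refine ⟨N, ⟨fun r => ?_, hrest, N.exists_forall_abs_c_le⟩, fun x => ?_, hdepth, ?_⟩
  · obtain ⟨p, hp⟩ := hfirst r
    simp only [hp]
    exact ((finCongr N.width_in).sum_comp fun j => v p.1 p.2 j ^ 2).trans_le
      ((hv p.1 p.2).trans_eq (one_pow 2))
  · rw [heval, hrep]
  · calc N.size = (m + 1) * tournamentSize m := hsize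
      _ ≤ (m + 1) * (3 * (m - 1)) := Nat.mul_le_mul_left _ (tournamentSize_le hm)
      _ = 3 * (m ^ 2 - 1 ^ 2) := by rw [Nat.sq_sub_sq, mul_left_comm]
      _ ≤ 3 * m ^ 2 + m - 1 := by omega

/-- Any `1`-Lipschitz (Euclidean norm) `m`-piecewise linear function `f : ℝ^d → ℝ` with
convex subdomains is exactly represented by a GroupSort network of grouping size `2`
satisfying Assumption 1, with depth `2⌈log₂ m⌉ + 1` and size at most `3m² + m - 1`. -/
theorem groupSortNet_represents_pwl_convex {d : ℕ} (f : (Fin d → ℝ) → ℝ) (m : ℕ)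
    (hm : 2 ≤ m)
    (Ω : Fin m → Set (Fin d → ℝ)) (a : Fin m → Fin d → ℝ) (b : Fin m → ℝ)
    (hf : IsPWLWith f m Ω a b) (hconv : ∀ i, Convex ℝ (Ω i))
    (hlip : ∀ x y : Fin d → ℝ, |f x - f y| ≤ Real.sqrt (∑ i, (x i - y i) ^ 2)) :
    ∃ N : GroupSortNet 2 d, N.Assumption1 ∧ (∀ x, N.eval x = f x) ∧
      N.depth = 2 * Nat.clog 2 m + 1 ∧
      N.size ≤ 3 * m ^ 2 + m - 1 :=
  groupSortNet_represents_pwl_convex_general hconv hf.2.2.2.1 hf.2.2.2.2 hlip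
end

section
/- Let f : ℝ → ℝ be 1-Lipschitz and m_f-piecewise linear. Then there exists a GroupSort neural network of grouping size 2 satisfying Assumption 1 that represents f exactly, with depth 2⌈log₂(m_f)⌉ + 1 and size at most 3m_f² + m_f − 1. -/
open Matrix

/-! For each pair of pieces `i`, `j` there is a line of slope at most `1` in absolute value lying
below `f` on piece `i` and above `f` on piece `j`: if the pieces are apart, a line of slope `± 1`
through the gap works because `f` is `1`-Lipschitz. Hence `f` is the minimum over `i` of the
maximum over `j` of these lines. Sorting pairs computes each maximum, and then the minimum, by a
knockout tournament of `⌈log₂ m⌉` rounds; a layer between two sorts merely selects winners, so its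
rows are coordinate vectors. -/

open scoped NNReal

section Separation

lemma forall_le_or_forall_le_of_disjoint {α : Type*} [LinearOrder α] {s t : Set α}
    (hs : s.OrdConnected) (ht : t.OrdConnected) (hst : Disjoint s t) :
    (∀ x ∈ s, ∀ y ∈ t, x ≤ y) ∨ ∀ x ∈ s, ∀ y ∈ t, y ≤ x := by
  by_contra! ⟨⟨x, hx, y, hy, hyx⟩, x', hx', y', hy', hxy'⟩
  rcases le_total x' y with h | h
  · exact hst.notMem_of_mem_right hy (hs.out hx' hx ⟨h, hyx.le⟩)
  · exact hst.notMem_of_mem_left hx' (ht.out hy hy' ⟨h, hxy'.le⟩)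

lemma antitone_sub_mul_of_lipschitzWith {f : ℝ → ℝ} {K : ℝ≥0} (hf : LipschitzWith K f) :
    Antitone fun x => f x - K * x := fun x y hxy => by
  have := hf.le_add_mul y x
  rw [Real.dist_eq, abs_of_nonneg (sub_nonneg.2 hxy)] at this
  dsimp only
  linarith

lemma exists_line_separating_of_le {f : ℝ → ℝ} {K : ℝ≥0} (hf : LipschitzWith K f) {s t : Set ℝ}
    (hs : s.Nonempty) (ht : t.Nonempty) (hst : ∀ x ∈ s, ∀ y ∈ t, x ≤ y) :
    ∃ b : ℝ, (∀ x ∈ s, K * x + b ≤ f x) ∧ ∀ y ∈ t, f y ≤ K * y + b := by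
  obtain ⟨b, hbt, hbs⟩ := exists_between_of_forall_le (ht.image fun y => f y - K * y)
    (hs.image fun x => f x - K * x) <| by
      rintro _ ⟨y, hy, rfl⟩ _ ⟨x, hx, rfl⟩
      exact antitone_sub_mul_of_lipschitzWith hf (hst x hx y hy)
  exact ⟨b, fun x hx => le_sub_iff_add_le'.1 (hbs ⟨x, hx, rfl⟩),
    fun y hy => sub_le_iff_le_add'.1 (hbt ⟨y, hy, rfl⟩)⟩

lemma exists_line_separating {f : ℝ → ℝ} {K : ℝ≥0} (hf : LipschitzWith K f) {s t : Set ℝ}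
    (hs : s.Nonempty) (ht : t.Nonempty) (hsc : s.OrdConnected) (htc : t.OrdConnected)
    (hst : Disjoint s t) :
    ∃ a b : ℝ, |a| ≤ K ∧ (∀ x ∈ s, a * x + b ≤ f x) ∧ ∀ y ∈ t, f y ≤ a * y + b := by
  rcases forall_le_or_forall_le_of_disjoint hsc htc hst with hle | hge
  · obtain ⟨b, hbs, hbt⟩ := exists_line_separating_of_le hf hs ht hle
    exact ⟨K, b, (abs_of_nonneg K.2).le, hbs, hbt⟩
  · have hneg : LipschitzWith K fun x => f (-x) := mul_one K ▸ hf.comp LipschitzWith.id.neg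
    obtain ⟨b, hbs, hbt⟩ := exists_line_separating_of_le hneg hs.neg ht.neg
      fun x hx y hy => neg_le_neg_iff.1 (hge _ hx _ hy)
    refine ⟨-K, b, by simp, fun x hx => ?_, fun y hy => ?_⟩
    · simpa using hbs (-x) (by simpa using hx)
    · simpa using hbt (-y) (by simpa using hy)

lemma exists_abs_slope_le_of_eqOn_affine {f : ℝ → ℝ} {s : Set ℝ} {K : ℝ≥0}
    (hf : LipschitzOnWith K f s) {a b : ℝ} (hab : ∀ x ∈ s, f x = a * x + b) :
    ∃ a' b' : ℝ, |a'| ≤ K ∧ ∀ x ∈ s, f x = a' * x + b' := by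
  obtain hs | ⟨x, hx, y, hy, hxy⟩ := s.subsingleton_or_nontrivial
  · obtain rfl | ⟨x, rfl⟩ := hs.eq_empty_or_singleton
    · exact ⟨0, 0, by simp⟩
    · exact ⟨0, f x, by simp⟩
  · refine ⟨a, b, ?_, hab⟩
    have hle : |a| * |x - y| ≤ K * |x - y| :=
      calc |a| * |x - y| = dist (f x) (f y) := by
            rw [hab x hx, hab y hy, Real.dist_eq, ← abs_mul]; ring_nf
        _ ≤ K * |x - y| := hf.dist_le_mul x hx y hy
    exact le_of_mul_le_mul_right hle (abs_pos.2 (sub_ne_zero.2 hxy))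

lemma IsPWLRealWith.exists_line_separating {f : ℝ → ℝ} {K : ℝ≥0} (hf : LipschitzWith K f) {m : ℕ}
    {I : Fin m → Set ℝ} {a b : Fin m → ℝ} (hI : IsPWLRealWith f m I a b) (i j : Fin m) :
    ∃ a' b' : ℝ, |a'| ≤ K ∧ (∀ x ∈ I i, a' * x + b' ≤ f x) ∧ ∀ y ∈ I j, f y ≤ a' * y + b' := by
  obtain ⟨-, hconn, hdisj, -, haff⟩ := hI
  have hline (k : Fin m) := exists_abs_slope_le_of_eqOn_affine hf.lipschitzOnWith (haff k)
  obtain hi | hi := (I i).eq_empty_or_nonempty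
  · obtain ⟨a', b', ha', hj⟩ := hline j
    exact ⟨a', b', ha', by simp [hi], fun y hy => (hj y hy).le⟩
  obtain hj | hj := (I j).eq_empty_or_nonempty
  · obtain ⟨a', b', ha', hi⟩ := hline i
    exact ⟨a', b', ha', fun x hx => (hi x hx).ge, by simp [hj]⟩
  obtain rfl | hij := eq_or_ne i j
  · obtain ⟨a', b', ha', hi⟩ := hline i
    exact ⟨a', b', ha', fun x hx => (hi x hx).ge, fun y hy => (hi y hy).le⟩
  · exact _root_.exists_line_separating hf hi hj (hconn i) (hconn j) (hdisj i j hij)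

end Separation

section Knockout

/-- The number of matches in a knockout round with `n` players, an odd player out being paired
with itself. -/
def ceilHalf (n : ℕ) : ℕ := (n + 1) / 2

lemma ceilHalf_pos {n : ℕ} (hn : 0 < n) : 0 < ceilHalf n := by
  unfold ceilHalf; omega

lemma ceilHalf_iterate_pos {n : ℕ} (hn : 0 < n) (t : ℕ) : 0 < ceilHalf^[t] n :=
  Set.MapsTo.iterate (f := ceilHalf) (s := Set.Ioi 0) (fun _ => ceilHalf_pos) t hn

lemma clog_two_eq_clog_ceilHalf_add_one {n : ℕ} (hn : 2 ≤ n) :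
    Nat.clog 2 n = Nat.clog 2 (ceilHalf n) + 1 :=
  Nat.clog_of_two_le one_lt_two hn

lemma ceilHalf_iterate_clog {n : ℕ} (hn : 0 < n) : ceilHalf^[Nat.clog 2 n] n = 1 := by
  induction n using Nat.strong_induction_on with
  | _ n ih =>
    obtain rfl | hn2 : n = 1 ∨ 2 ≤ n := by omega
    · simp
    · rw [clog_two_eq_clog_ceilHalf_add_one hn2, Function.iterate_succ_apply]
      exact ih _ (by unfold ceilHalf; omega) (ceilHalf_pos hn)

lemma two_mul_sum_ceilHalf_iterate_le {n : ℕ} (hn : 0 < n) :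
    2 * ∑ t ∈ Finset.range (Nat.clog 2 n), ceilHalf^[t + 1] n ≤ 3 * (n - 1) := by
  induction n using Nat.strong_induction_on with
  | _ n ih =>
    obtain rfl | hn2 : n = 1 ∨ 2 ≤ n := by omega
    · simp
    have hrec : ∑ t ∈ Finset.range (Nat.clog 2 n), ceilHalf^[t + 1] n =
        ∑ t ∈ Finset.range (Nat.clog 2 (ceilHalf n)), ceilHalf^[t + 1] (ceilHalf n)
          + ceilHalf n := by
      rw [clog_two_eq_clog_ceilHalf_add_one hn2, Finset.sum_range_succ']
      rfl
    -- The inductive step needs `5 * ceilHalf n ≤ 3 * n`, which fails at `n = 3`.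
    obtain rfl | _ := eq_or_ne n 3
    · decide +revert
    · have := ih (ceilHalf n) (by unfold ceilHalf; omega) (ceilHalf_pos hn)
      rw [hrec]
      unfold ceilHalf at *
      omega

/-- Seating plan of a knockout round played in parallel in consecutive groups of `n` players: the
index of the player sitting at place `r`. Each group gets `2 * ceilHalf n` places, its last player
taking two of them when `n` is odd. -/
def knockoutSeat (n r : ℕ) : ℕ :=
  r / (2 * ceilHalf n) * n + min (r % (2 * ceilHalf n)) (n - 1)

lemma knockoutSeat_zero (n : ℕ) : knockoutSeat n 0 = 0 := by simp [knockoutSeat]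

lemma knockoutSeat_mul_add {n s : ℕ} (hs : s < 2 * ceilHalf n) (i : ℕ) :
    knockoutSeat n (i * (2 * ceilHalf n) + s) = i * n + min s (n - 1) := by
  rw [knockoutSeat, mul_comm i (2 * ceilHalf n), Nat.mul_add_div (by omega), Nat.div_eq_of_lt hs,
    Nat.mul_add_mod, Nat.mod_eq_of_lt hs, add_zero]

lemma knockoutSeat_lt {n k r : ℕ} (hn : 0 < n) (hr : r < k * (2 * ceilHalf n)) :
    knockoutSeat n r < k * n := by
  have hgroup : r / (2 * ceilHalf n) + 1 ≤ k := Nat.div_lt_of_lt_mul (by rwa [mul_comm])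
  calc knockoutSeat n r < (r / (2 * ceilHalf n) + 1) * n := by
        rw [knockoutSeat, add_one_mul]; omega
    _ ≤ k * n := Nat.mul_le_mul_right n hgroup

variable {α : Type*}

/-- One knockout round among consecutive groups of `n` players: the sequence of winners, when the
players are `w` and the winner of `a` against `b` is `op a b`. -/
def knockoutRound (op : α → α → α) (n : ℕ) (w : ℕ → α) (p : ℕ) : α :=
  op (w (knockoutSeat n (2 * p))) (w (knockoutSeat n (2 * p + 1)))

/-- The players remaining after `t` knockout rounds among consecutive groups of `n` players. -/
def knockout (op : α → α → α) (n : ℕ) (w : ℕ → α) : ℕ → ℕ → α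
  | 0 => w
  | t + 1 => knockoutRound op (ceilHalf^[t] n) (knockout op n w t)

lemma knockoutRound_mul_add (op : α → α → α) {n q : ℕ} (hq : q < ceilHalf n) (w : ℕ → α) (i : ℕ) :
    knockoutRound op n w (i * ceilHalf n + q) =
      op (w (i * n + min (2 * q) (n - 1))) (w (i * n + min (2 * q + 1) (n - 1))) := by
  have hplace : 2 * (i * ceilHalf n + q) = i * (2 * ceilHalf n) + 2 * q := by ring
  rw [knockoutRound, hplace, add_assoc, knockoutSeat_mul_add (by omega),
    knockoutSeat_mul_add (by omega)]

lemma knockoutRound_sup_le_iff [SemilatticeSup α] {n : ℕ} (hn : 0 < n) (w : ℕ → α) (i : ℕ) (y : α) :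
    (∀ q < ceilHalf n, knockoutRound (· ⊔ ·) n w (i * ceilHalf n + q) ≤ y) ↔
      ∀ j < n, w (i * n + j) ≤ y := by
  refine ⟨fun h j hj => ?_, fun h q hq => ?_⟩
  · have hq : j / 2 < ceilHalf n := by unfold ceilHalf; omega
    have hwin := h (j / 2) hq
    rw [knockoutRound_mul_add _ hq, sup_le_iff] at hwin
    obtain hj2 | hj2 : min (2 * (j / 2)) (n - 1) = j ∨ min (2 * (j / 2) + 1) (n - 1) = j := by omega
    · exact hj2 ▸ hwin.1
    · exact hj2 ▸ hwin.2
  · rw [knockoutRound_mul_add _ hq]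
    exact sup_le (h _ (by omega)) (h _ (by omega))

lemma knockout_group_sup_le_iff [SemilatticeSup α] {n : ℕ} (hn : 0 < n) (w : ℕ → α) (t i : ℕ)
    (y : α) :
    (∀ q < ceilHalf^[t] n, knockout (· ⊔ ·) n w t (i * ceilHalf^[t] n + q) ≤ y) ↔
      ∀ j < n, w (i * n + j) ≤ y := by
  induction t with
  | zero => rfl
  | succ t ih =>
    rw [← ih, Function.iterate_succ_apply']
    exact knockoutRound_sup_le_iff (ceilHalf_iterate_pos hn t) _ i y

lemma knockout_sup_le_iff [SemilatticeSup α] {n : ℕ} (hn : 0 < n) (w : ℕ → α) (i : ℕ) (y : α) :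
    knockout (· ⊔ ·) n w (Nat.clog 2 n) i ≤ y ↔ ∀ j < n, w (i * n + j) ≤ y := by
  simpa [ceilHalf_iterate_clog hn] using knockout_group_sup_le_iff hn w (Nat.clog 2 n) i y

lemma le_knockout_inf_iff [SemilatticeInf α] {n : ℕ} (hn : 0 < n) (w : ℕ → α) (i : ℕ) (y : α) :
    y ≤ knockout (· ⊓ ·) n w (Nat.clog 2 n) i ↔ ∀ j < n, y ≤ w (i * n + j) :=
  knockout_sup_le_iff (α := αᵒᵈ) hn w i y

lemma knockout_inf_knockout_sup_eq_of_saddle [Lattice α] {n k : ℕ} (hk : k < n) {w : ℕ → α} {y : α}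
    (hrow : ∀ j < n, w (k * n + j) ≤ y) (hcol : ∀ i < n, y ≤ w (i * n + k)) :
    knockout (· ⊓ ·) n (knockout (· ⊔ ·) n w (Nat.clog 2 n)) (Nat.clog 2 n) 0 = y := by
  have hn : 0 < n := k.zero_le.trans_lt hk
  have hmin := (le_knockout_inf_iff hn (knockout (· ⊔ ·) n w (Nat.clog 2 n)) 0 _).1 le_rfl k hk
  rw [zero_mul, zero_add] at hmin
  refine le_antisymm (hmin.trans ((knockout_sup_le_iff hn w k y).2 hrow))
    ((le_knockout_inf_iff hn _ 0 y).2 fun i hi => ?_)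
  rw [zero_mul, zero_add]
  exact (hcol i hi).trans ((knockout_sup_le_iff hn w i _).1 le_rfl k hk)

end Knockout

lemma comp_sort_fin_two {α : Type*} [LinearOrder α] (x : Fin 2 → α) :
    x ∘ Tuple.sort x = ![min (x 0) (x 1), max (x 0) (x 1)] := by
  rcases le_total (x 0) (x 1) with h | h
  · have hsorted : Monotone (x ∘ (1 : Equiv.Perm (Fin 2))) := by
      simpa [Fin.monotone_iff_le_succ] using h
    rw [← Tuple.comp_sort_eq_comp_iff_monotone.2 hsorted]
    ext i
    fin_cases i <;> simp [h]
  · have hsorted : Monotone (x ∘ Equiv.swap (0 : Fin 2) 1) := by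
      simpa [Fin.monotone_iff_le_succ] using h
    rw [← Tuple.comp_sort_eq_comp_iff_monotone.2 hsorted]
    ext i
    fin_cases i <;> simp [h]

lemma groupSortFun_two_pair {ν p : ℕ} (x : Fin ν → ℝ) (hp : 2 * p + 1 < ν) (b : Bool)
    (hb : 2 * p + b.toNat < ν) :
    groupSortFun 2 x ⟨2 * p + b.toNat, hb⟩ =
      if b then min (x ⟨2 * p, Nat.lt_of_succ_lt hp⟩) (x ⟨2 * p + 1, hp⟩)
      else max (x ⟨2 * p, Nat.lt_of_succ_lt hp⟩) (x ⟨2 * p + 1, hp⟩) := by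
  have hdiv : (2 * p + b.toNat) / 2 * 2 = 2 * p := by cases b <;> simp <;> omega
  have hmod : (2 * p + b.toNat) % 2 = b.toNat := by cases b <;> simp
  have hgroup : (fun j : Fin 2 =>
      if h : 2 * p + (j : ℕ) < ν then x ⟨2 * p + (j : ℕ), h⟩ else 0) =
      ![x ⟨2 * p, Nat.lt_of_succ_lt hp⟩, x ⟨2 * p + 1, hp⟩] := by
    ext j
    fin_cases j <;> simp [hp, Nat.lt_of_succ_lt hp]
  simp only [groupSortFun, two_pos, dif_pos, hdiv, hmod, hgroup, comp_sort_fin_two]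
  cases b <;> rfl

/-- Data of a network on `ℝ` of grouping size `2` in which every row of an affine layer after the
first selects the larger or the smaller entry of one pair sorted by the preceding layer. There are
`hidden` hidden layers, the `t`-th of them, counted from `0`, having `pairs t` pairs; row `r` of the
first affine layer is `x ↦ slope r * x + intercept r`, and row `r` of affine layer `t + 1` selects
from pair `sel t r` of hidden layer `t` the minimum if `lower t` and the maximum otherwise. -/
structure SelectionNet where
  hidden : ℕ
  pairs : ℕ → ℕ
  slope : ℕ → ℝ
  intercept : ℕ → ℝ
  sel : ℕ → ℕ → ℕ
  lower : ℕ → Bool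

namespace SelectionNet

variable (S : SelectionNet)

/-- The number of rows of the `t`-th affine layer, counted from `0`. -/
def rows (t : ℕ) : ℕ := if t < S.hidden then 2 * S.pairs t else 1

/-- Every row selects from a pair that exists in the preceding layer. -/
def WellFormed : Prop := ∀ t < S.hidden, ∀ r < S.rows (t + 1), S.sel t r < S.pairs t

/-- The position, in the `t`-th sorted hidden layer, of the coordinate selected by row `r`. -/
def entry (t r : ℕ) : ℕ := 2 * S.sel t r + (S.lower t).toNat

/-- The `r`-th output of the `t`-th affine layer on input `x`. -/
noncomputable def value (x : ℝ) : ℕ → ℕ → ℝ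
  | 0, r => S.slope r * x + S.intercept r
  | t + 1, r =>
    if S.lower t then min (value x t (2 * S.sel t r)) (value x t (2 * S.sel t r + 1))
    else max (value x t (2 * S.sel t r)) (value x t (2 * S.sel t r + 1))

/-- The widths of the layers, counting the input as layer `0`. -/
def width : ℕ → ℕ
  | 0 => 1
  | t + 1 => S.rows t

/-- The GroupSort network described by `S`. -/
noncomputable def toNet : GroupSortNet 2 1 where
  depth := S.hidden + 1
  depth_pos := Nat.le_add_left 1 S.hidden
  width := S.width
  width_in := rfl
  width_out := if_neg (lt_irrefl S.hidden)
  width_div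
    | 0, h, _ => absurd h (by decide)
    | t + 1, _, h => by
      rw [width, rows, if_pos (by omega)]
      exact dvd_mul_right 2 (S.pairs t)
  V
    | 0 => of fun r _ => S.slope r
    | t + 1 => of fun r s => if (s : ℕ) = S.entry t r then 1 else 0
  c
    | 0 => fun r => S.intercept r
    | _ + 1 => 0

variable {S}

lemma WellFormed.two_mul_sel_add_one_lt (hS : S.WellFormed) {t r : ℕ} (ht : t < S.hidden)
    (hr : r < S.rows (t + 1)) : 2 * S.sel t r + 1 < S.rows t := by
  have := hS t ht r hr
  rw [rows, if_pos ht]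
  omega

lemma WellFormed.entry_lt (hS : S.WellFormed) {t r : ℕ} (ht : t < S.hidden)
    (hr : r < S.rows (t + 1)) : S.entry t r < S.rows t := by
  have := hS.two_mul_sel_add_one_lt ht hr
  have := (S.lower t).toNat_le
  unfold entry
  omega

lemma WellFormed.toNet_V_succ (hS : S.WellFormed) {t : ℕ} (ht : t < S.hidden)
    (r : Fin (S.toNet.width (t + 1 + 1))) :
    S.toNet.V (t + 1) r = Pi.single ⟨S.entry t r, hS.entry_lt ht r.2⟩ 1 := by
  ext s
  change (if (s : ℕ) = S.entry t r then (1 : ℝ) else 0) = _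
  simp only [Pi.single_apply, Fin.ext_iff]

lemma WellFormed.preactivation_eq_value (hS : S.WellFormed) (x : ℝ) {t : ℕ} (ht : t ≤ S.hidden)
    (r : Fin (S.toNet.width (t + 1))) :
    (S.toNet.V t *ᵥ S.toNet.post (fun _ => x) t + S.toNet.c t) r = S.value x t r := by
  induction t with
  | zero =>
    change ∑ _ : Fin 1, S.slope r * x + S.intercept r = S.slope r * x + S.intercept r
    simp
  | succ t ih =>
    have hc : S.toNet.c (t + 1) r = 0 := rfl
    rw [Pi.add_apply, hc, add_zero, mulVec, hS.toNet_V_succ ht, single_one_dotProduct,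
      GroupSortNet.post]
    have hpair : 2 * S.sel t r + 1 < S.toNet.width (t + 1) := hS.two_mul_sel_add_one_lt ht r.2
    refine (groupSortFun_two_pair _ hpair _ _).trans ?_
    rw [ih (Nat.le_of_succ_le ht), ih (Nat.le_of_succ_le ht)]
    rfl

lemma WellFormed.toNet_eval (hS : S.WellFormed) (x : ℝ) :
    S.toNet.eval (fun _ => x) = S.value x S.hidden 0 :=
  hS.preactivation_eq_value x le_rfl _

lemma WellFormed.toNet_assumption1 (hS : S.WellFormed) (hslope : ∀ r, |S.slope r| ≤ 1) :
    S.toNet.Assumption1 := by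
  refine ⟨fun r => ?_, fun i hi hi' r => ?_, ?_⟩
  · change ∑ _ : Fin 1, S.slope r ^ 2 ≤ 1
    simpa using hslope r
  · obtain ⟨t, rfl⟩ := Nat.exists_eq_add_of_le' hi
    rw [hS.toNet_V_succ (Nat.lt_of_succ_lt_succ hi')]
    simp [Pi.single_apply, apply_ite abs]
  · obtain ⟨K, hK⟩ := Finite.exists_le fun r : Fin (S.rows 0) => |S.intercept r|
    refine ⟨max K 0, le_max_right K 0, fun i _ r => ?_⟩
    cases i with
    | zero => exact (hK r).trans (le_max_left K 0)
    | succ t => exact abs_zero.trans_le (le_max_right K 0)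

variable (S) in
lemma toNet_size : S.toNet.size = ∑ t ∈ Finset.range S.hidden, 2 * S.pairs t := by
  have hIcc : Finset.Icc 1 S.hidden = Finset.Ico (0 + 1) (S.hidden + 1) := rfl
  change ∑ i ∈ Finset.Icc 1 S.hidden, S.width i = _
  rw [hIcc, ← Finset.sum_Ico_add', ← Finset.range_eq_Ico]
  exact Finset.sum_congr rfl fun t ht => if_pos (Finset.mem_range.1 ht)

end SelectionNet

section Minimax

/-- The number of players per group in the `t`-th of `2 * Nat.clog 2 m` knockout rounds, the first
half of which is played within `m` groups of `m` players and the second half among the `m` group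
winners. -/
def roundSize (m t : ℕ) : ℕ :=
  if t < Nat.clog 2 m then ceilHalf^[t] m else ceilHalf^[t - Nat.clog 2 m] m

/-- The number of groups in the `t`-th round, for the same schedule as in `roundSize`. -/
def roundGroups (m t : ℕ) : ℕ := if t < Nat.clog 2 m then m else 1

/-- The network computing `min_i max_j (a (i * m + j) * x + b (i * m + j))` for `i, j < m` by
knockout tournaments. -/
def minimaxNet (m : ℕ) (a b : ℕ → ℝ) : SelectionNet where
  hidden := 2 * Nat.clog 2 m
  pairs t := roundGroups m t * ceilHalf (roundSize m t)
  slope r := a (knockoutSeat m r)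
  intercept r := b (knockoutSeat m r)
  sel t r := knockoutSeat (roundSize m (t + 1)) r
  lower t := decide (Nat.clog 2 m ≤ t)

variable {m : ℕ}

lemma roundSize_pos (hm : 0 < m) (t : ℕ) : 0 < roundSize m t := by
  unfold roundSize
  split_ifs <;> exact ceilHalf_iterate_pos hm _

lemma roundGroups_pos (hm : 0 < m) (t : ℕ) : 0 < roundGroups m t := by
  unfold roundGroups
  split_ifs <;> omega

lemma roundSize_of_lt {t : ℕ} (ht : t < Nat.clog 2 m) : roundSize m t = ceilHalf^[t] m :=
  if_pos ht

lemma roundSize_clog_add (m t : ℕ) : roundSize m (Nat.clog 2 m + t) = ceilHalf^[t] m := by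
  simp [roundSize]

lemma roundGroups_mul_roundSize_succ (hm : 0 < m) (t : ℕ) :
    roundGroups m (t + 1) * roundSize m (t + 1) = roundGroups m t * ceilHalf (roundSize m t) := by
  obtain ht | ht | ht := lt_trichotomy (t + 1) (Nat.clog 2 m)
  · have ht' : t < Nat.clog 2 m := by omega
    simp only [roundGroups, roundSize, if_pos ht, if_pos ht', Function.iterate_succ_apply']
  · have ht' : t < Nat.clog 2 m := by omega
    have hlast : ceilHalf^[t + 1] m = 1 := ht ▸ ceilHalf_iterate_clog hm
    rw [Function.iterate_succ_apply'] at hlast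
    simp [roundGroups, roundSize, ht, ht', hlast]
  · obtain ⟨j, rfl⟩ := Nat.exists_eq_add_of_le (Nat.le_of_lt_succ ht)
    simp [roundGroups, roundSize, add_assoc, Function.iterate_succ_apply']

variable (a b : ℕ → ℝ)

lemma minimaxNet_wellFormed (hm : 0 < m) : (minimaxNet m a b).WellFormed := by
  intro t _ r hr
  change knockoutSeat (roundSize m (t + 1)) r < roundGroups m t * ceilHalf (roundSize m t)
  rw [← roundGroups_mul_roundSize_succ hm]
  unfold SelectionNet.rows at hr
  split_ifs at hr
  · exact knockoutSeat_lt (roundSize_pos hm _) (hr.trans_eq (Nat.mul_left_comm _ _ _))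
  · rw [Nat.lt_one_iff.1 hr, knockoutSeat_zero]
    exact Nat.mul_pos (roundGroups_pos hm _) (roundSize_pos hm _)

lemma minimaxNet_value_of_le_clog (x : ℝ) {t : ℕ} (ht : t ≤ Nat.clog 2 m) (r : ℕ) :
    (minimaxNet m a b).value x t r =
      knockout (· ⊔ ·) m (fun p => a p * x + b p) t (knockoutSeat (roundSize m t) r) := by
  induction t generalizing r with
  | zero =>
    have hsize : roundSize m 0 = m := by simp [roundSize]
    rw [hsize]
    rfl
  | succ t ih =>
    have hlower : (minimaxNet m a b).lower t = false := decide_eq_false (by omega)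
    simp only [SelectionNet.value, hlower, ih (Nat.le_of_succ_le ht), roundSize_of_lt ht]
    rfl

lemma minimaxNet_value_clog_add (x : ℝ) (t r : ℕ) :
    (minimaxNet m a b).value x (Nat.clog 2 m + t) r =
      knockout (· ⊓ ·) m (knockout (· ⊔ ·) m (fun p => a p * x + b p) (Nat.clog 2 m)) t
        (knockoutSeat (ceilHalf^[t] m) r) := by
  induction t generalizing r with
  | zero =>
    rw [← roundSize_clog_add]
    exact minimaxNet_value_of_le_clog a b x le_rfl r
  | succ t ih =>
    have hlower : (minimaxNet m a b).lower (Nat.clog 2 m + t) = true := decide_eq_true (by omega)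
    rw [← roundSize_clog_add, ← add_assoc]
    simp only [SelectionNet.value, hlower, ih]
    rfl

lemma minimaxNet_eval_eq_of_saddle {k : ℕ} (hk : k < m) {x y : ℝ}
    (hrow : ∀ j < m, a (k * m + j) * x + b (k * m + j) ≤ y)
    (hcol : ∀ i < m, y ≤ a (i * m + k) * x + b (i * m + k)) :
    (minimaxNet m a b).toNet.eval (fun _ => x) = y := by
  rw [(minimaxNet_wellFormed a b (k.zero_le.trans_lt hk)).toNet_eval]
  have hvalue := minimaxNet_value_clog_add (m := m) a b x (Nat.clog 2 m) 0
  rw [← two_mul, knockoutSeat_zero] at hvalue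
  exact hvalue.trans (knockout_inf_knockout_sup_eq_of_saddle hk hrow hcol)

lemma ofNat_mul_add [NeZero m] (i j : Fin m) : Fin.ofNat m (i * m + j) = j := by
  ext
  simp [Nat.mod_eq_of_lt]

lemma ofNat_mul_add_div [NeZero m] (i j : Fin m) : Fin.ofNat m ((i * m + j) / m) = i := by
  ext
  rw [mul_comm, Nat.mul_add_div (NeZero.pos m), Nat.div_eq_of_lt j.2]
  simp

lemma minimaxNet_size_le (hm : 0 < m) : (minimaxNet m a b).toNet.size ≤ 3 * (m ^ 2 - 1) := by
  set matchCount := ∑ t ∈ Finset.range (Nat.clog 2 m), ceilHalf^[t + 1] m with h_count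
  have hmax : ∑ t ∈ Finset.range (Nat.clog 2 m), 2 * (minimaxNet m a b).pairs t =
      2 * m * matchCount := by
    rw [h_count, Finset.mul_sum]
    refine Finset.sum_congr rfl fun t ht => ?_
    have ht : t < Nat.clog 2 m := Finset.mem_range.1 ht
    simp only [minimaxNet, roundGroups, if_pos ht, roundSize_of_lt ht, mul_assoc,
      Function.iterate_succ_apply']
  have hmin : ∑ t ∈ Finset.range (Nat.clog 2 m),
      2 * (minimaxNet m a b).pairs (Nat.clog 2 m + t) = 2 * matchCount := by
    rw [h_count, Finset.mul_sum]
    refine Finset.sum_congr rfl fun t _ => ?_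
    simp [minimaxNet, roundGroups, roundSize_clog_add, Function.iterate_succ_apply']
  calc (minimaxNet m a b).toNet.size
      = ∑ t ∈ Finset.range (Nat.clog 2 m + Nat.clog 2 m), 2 * (minimaxNet m a b).pairs t := by
        rw [SelectionNet.toNet_size, ← two_mul]; rfl
    _ = (m + 1) * (2 * matchCount) := by rw [Finset.sum_range_add, hmax, hmin]; ring
    _ ≤ (m + 1) * (3 * (m - 1)) := Nat.mul_le_mul_left _ (two_mul_sum_ceilHalf_iterate_le hm)
    _ = 3 * (m ^ 2 - 1) := by
        rw [Nat.mul_left_comm, ← Nat.sq_sub_sq, one_pow]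

end Minimax

/-- Any `1`-Lipschitz `m`-piecewise linear function `f : ℝ → ℝ` is exactly represented by
a GroupSort network of grouping size `2` satisfying Assumption 1, with depth
`2⌈log₂ m⌉ + 1` and size at most `3m² + m - 1`. -/
theorem groupSortNet_represents_pwl_real (f : ℝ → ℝ) (hlip : LipschitzWith 1 f)
    (m : ℕ) (hm : 2 ≤ m) (hf : IsPWLReal f m) :
    ∃ N : GroupSortNet 2 1, N.Assumption1 ∧ (∀ x : ℝ, N.eval (fun _ => x) = f x) ∧
      N.depth = 2 * Nat.clog 2 m + 1 ∧
      N.size ≤ 3 * m ^ 2 + m - 1 := by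
  obtain ⟨I, a, b, hI⟩ := hf
  choose A B hA hbelow habove using hI.exists_line_separating hlip
  have hm0 : 0 < m := by omega
  have : NeZero m := ⟨hm0.ne'⟩
  let slope (p : ℕ) : ℝ := A (Fin.ofNat m (p / m)) (Fin.ofNat m p)
  let intercept (p : ℕ) : ℝ := B (Fin.ofNat m (p / m)) (Fin.ofNat m p)
  have hsplit (i j : Fin m) : slope (i * m + j) = A i j ∧ intercept (i * m + j) = B i j := by
    simp only [slope, intercept, ofNat_mul_add_div, ofNat_mul_add, and_self]
  refine ⟨(minimaxNet m slope intercept).toNet,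
    (minimaxNet_wellFormed slope intercept hm0).toNet_assumption1 fun r => hA _ _, fun x => ?_, rfl,
    (minimaxNet_size_le slope intercept hm0).trans (by omega)⟩
  obtain ⟨k, hk⟩ : ∃ k, x ∈ I k := Set.mem_iUnion.1 (hI.2.2.2.1 ▸ Set.mem_univ x)
  refine minimaxNet_eval_eq_of_saddle slope intercept k.2 (fun j hj => ?_) fun i hi => ?_
  · rw [(hsplit k ⟨j, hj⟩).1, (hsplit k ⟨j, hj⟩).2]
    exact hbelow k ⟨j, hj⟩ x hk
  · rw [(hsplit ⟨i, hi⟩ k).1, (hsplit ⟨i, hi⟩ k).2]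
    exact habove ⟨i, hi⟩ k x hk
end
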